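/- Let 𝒫₁ = (P₁, μ₁, σ₁) be an n₁-dimensional system and 𝒫₂ = (P₂, μ₂, σ₂) an n₂-dimensional system, and let 𝒫₁ × 𝒫₂ = (P₁ × P₂, μ₁ × μ₂, σ₁ ⊞ σ₂) be the composite system. Then for every T ≥ 0, the μ-canonical distribution of temperature T of the composite system 𝒫₁ × 𝒫₂ equals the product u₁ × u₂ : (x,y) ↦ u₁(x)·u₂(y), where u₁ and u₂ are the μ-canonical distributions of temperature T of 𝒫₁ and 𝒫₂, respectively. -/

import Mathlib

open MeasureTheory Filter Topology
open scoped ENNReal NNReal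

noncomputable section

variable {ι : Type} [Fintype ι]

/-- A polytope in `ℝ^ι`: a compact set with nonempty interior which is a finite
intersection of closed half-spaces (cut out by nonzero affine functions). -/
def IsPolytope (P : Set (ι → ℝ)) : Prop :=
  IsCompact P ∧ (interior P).Nonempty ∧
    ∃ (m : ℕ) (L : Fin m → ((ι → ℝ) →ᵃ[ℝ] ℝ)),
      (∀ k, L k ≠ 0) ∧ P = ⋂ k, {x | 0 ≤ L k x}

/-- `F` is a face of `P`. -/
def IsFaceOf (P F : Set (ι → ℝ)) : Prop :=
  ∃ ℓ : (ι → ℝ) →ᵃ[ℝ] ℝ, ℓ ≠ 0 ∧ (∀ y ∈ P, 0 ≤ ℓ y) ∧ F = {y ∈ P | ℓ y = 0}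

/-- A facet: a face spanning an affine subspace of codimension one. -/
def IsFacetOf (P F : Set (ι → ℝ)) : Prop :=
  IsFaceOf P F ∧ Module.finrank ℝ (vectorSpan ℝ F) + 1 = Fintype.card ι

/-- A simple polytope: every vertex lies on exactly `dim` facets. -/
def IsSimplePolytope (P : Set (ι → ℝ)) : Prop :=
  IsPolytope P ∧ ∀ v : ι → ℝ, IsFaceOf P {v} →
    {F : Set (ι → ℝ) | IsFacetOf P F ∧ v ∈ F}.ncard = Fintype.card ι

/-- A system `𝒫 = (P, μ, σ)` on `ℝ^ι`: a simple polytope `P`, a flat measure `μ`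
on `P` and a flat measure `σ` on `∂P`. -/
structure SystemOn (ι : Type) [Fintype ι] where
  P : Set (ι → ℝ)
  μ : Measure (ι → ℝ)
  σ : Measure (ι → ℝ)
  simple : IsSimplePolytope P
  flat : ∃ c : ℝ, 0 < c ∧ μ = ENNReal.ofReal c • volume.restrict P
  bdry_supp : σ (frontier P)ᶜ = 0
  flat_bdry : ∀ F : Set (ι → ℝ), IsFacetOf P F →
    ∃ c : ℝ, 0 < c ∧ σ.restrict F =
      ENNReal.ofReal c •
        (Measure.hausdorffMeasure ((Fintype.card ι : ℝ) - 1)).restrict F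

/-- `y log y`. -/
def xlogx (y : ℝ≥0∞) : ℝ := y.toReal * Real.log y.toReal

/-- Log-convexity on `P`. -/
def LogConvexOn (P : Set (ι → ℝ)) (u : (ι → ℝ) → ℝ≥0∞) : Prop :=
  ∀ ⦃x⦄, x ∈ P → ∀ ⦃y⦄, y ∈ P → ∀ ⦃t : ℝ⦄, 0 ≤ t → t ≤ 1 →
    u ((1 - t) • x + t • y) ≤ u x ^ (1 - t) * u y ^ t

/-- `ℳ^{exp,p}(P)`. -/
def MExp (S : SystemOn ι) (p : ℝ) : Set ((ι → ℝ) → ℝ≥0∞) :=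
  {u | LowerSemicontinuousOn u S.P ∧ (∀ x ∈ S.P, 0 < u x) ∧ LogConvexOn S.P u ∧
    (∫⁻ x in S.P, u x ∂S.μ) = S.μ S.P ∧ (∫⁻ x in S.P, u x ^ p ∂S.μ) < ⊤}

/-- The entropy `S_𝒫(u) = −(1/μ(P)) ∫_P u log u dμ`. -/
def Spf (S : SystemOn ι) (u : (ι → ℝ) → ℝ≥0∞) : EReal :=
  (((S.μ S.P).toReal⁻¹ : ℝ) : EReal) *
    (((∫⁻ x in S.P, ENNReal.ofReal (-(xlogx (u x))) ∂S.μ : ℝ≥0∞) : EReal)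
      - ((∫⁻ x in S.P, ENNReal.ofReal (xlogx (u x)) ∂S.μ : ℝ≥0∞) : EReal))

/-- The internal μ-energy `U_𝒫(u) = (1/μ(P)) ∫_{∂P} u dσ`. -/
def Upf (S : SystemOn ι) (u : (ι → ℝ) → ℝ≥0∞) : ℝ≥0∞ :=
  (S.μ S.P)⁻¹ * ∫⁻ x in frontier S.P, u x ∂S.σ

/-- The free μ-energy `F_𝒫(T,u)`. -/
def Fpf (S : SystemOn ι) (T : ℝ) (u : (ι → ℝ) → ℝ≥0∞) : EReal :=
  if Spf S u = ⊥ then ⊤ else (Upf S u : EReal) - (T : EReal) * Spf S u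

/-- `u` is the μ-canonical distribution of temperature `T ≥ 0`. -/
def IsCanonical (S : SystemOn ι) (T : ℝ) (u : (ι → ℝ) → ℝ≥0∞) : Prop :=
  u ∈ MExp S 1 ∧
  (0 < T → ∀ u' ∈ MExp S 1, Fpf S T u ≤ Fpf S T u') ∧
  (T = 0 → (∀ u' ∈ MExp S 1, Upf S u ≤ Upf S u') ∧
    ∀ u' ∈ MExp S 1, (∀ u'' ∈ MExp S 1, Upf S u' ≤ Upf S u'') → Spf S u' ≤ Spf S u)

/-- The canonical identification `ℝ^{ι₁} × ℝ^{ι₂} ≅ ℝ^{ι₁ ⊕ ι₂}`. -/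
def joinMap (ι₁ ι₂ : Type) : ((ι₁ → ℝ) × (ι₂ → ℝ)) → ((ι₁ ⊕ ι₂) → ℝ) :=
  fun p => Sum.elim p.1 p.2

/-!
On `ℳ^{exp,1}(P)` the entropy is minus the relative entropy with respect to the equidistribution
on `P`, so for `T ≥ 0` minimizing the free energy means minimizing boundary energy plus `T` times
relative entropy. Given a competitor `u` on the composite system, its two marginals lie in the
spaces `ℳ^{exp,1}(P₁)` and `ℳ^{exp,1}(P₂)`: log-convexity survives averaging by Hölder's
inequality, and lower semicontinuity by Fatou's lemma. The boundary energy of `u` is the sum of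
those of its marginals, while its relative entropy is at least the sum of those of its marginals,
with equality for products. Hence the product of two minimizers is a minimizer, and ties in the
free energy are compared by their relative entropies in the same way.

Uniqueness follows from strict convexity of the relative entropy, applied at the midpoint of two
minimizers. This requires finite relative entropies, which a finite boundary energy guarantees:
the polytope is the union of the cones over its facets, and on the segment from a fixed interior
point to a boundary point `b` the integral of `u log u` is bounded by an affine function of `u b`.
The midpoint argument gives equality almost everywhere; lower semicontinuity and log-convexity
upgrade it to equality on all of `P`.
-/

section RelativeEntropy

open InformationTheory ProbabilityTheory

variable {X Y : Type*} [MeasurableSpace X] [MeasurableSpace Y]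

lemma withDensity_map_measurableEquiv (e : X ≃ᵐ Y) (ν : Measure X) (f : Y → ℝ≥0∞) :
    (ν.map e).withDensity f = (ν.withDensity (f ∘ e)).map e := by
  ext s hs
  rw [withDensity_apply _ hs, e.map_apply, withDensity_apply _ (e.measurable hs),
    e.restrict_map, lintegral_map_equiv]
  rfl

lemma klDiv_map_measurableEquiv (e : X ≃ᵐ Y) (μ ν : Measure X) [IsFiniteMeasure μ]
    [IsFiniteMeasure ν] : klDiv (μ.map e) (ν.map e) = klDiv μ ν := by
  refine (klDiv_map_le μ ν e.measurable).antisymm ?_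
  simpa using klDiv_map_le (μ.map e) (ν.map e) e.symm.measurable

lemma klDiv_prod (μ₁ ν₁ : Measure X) (μ₂ ν₂ : Measure Y) [IsProbabilityMeasure μ₁]
    [IsFiniteMeasure ν₁] [IsProbabilityMeasure μ₂] [IsProbabilityMeasure ν₂] :
    klDiv (μ₁.prod μ₂) (ν₁.prod ν₂) = klDiv μ₁ ν₁ + klDiv μ₂ ν₂ := by
  have hswap : klDiv (μ₁.prod μ₂) (μ₁.prod ν₂) = klDiv μ₂ ν₂ := by
    have hcomm : klDiv ((μ₁.prod μ₂).map Prod.swap) ((μ₁.prod ν₂).map Prod.swap) = _ :=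
      klDiv_map_measurableEquiv MeasurableEquiv.prodComm _ _
    rw [← hcomm, Measure.prod_swap, Measure.prod_swap]
    simpa using klDiv_compProd_left μ₂ ν₂ (Kernel.const Y μ₁)
  simpa [hswap] using klDiv_compProd_eq_add μ₁ ν₁ (Kernel.const X μ₂) (Kernel.const X ν₂)

/- The chain rule splits off the first marginal; what is left dominates the divergence of the
second marginal by the data processing inequality. -/
lemma klDiv_fst_add_klDiv_snd_le [StandardBorelSpace Y] (π : Measure (X × Y)) (ν₁ : Measure X)
    (ν₂ : Measure Y) [IsProbabilityMeasure π] [IsFiniteMeasure ν₁] [IsProbabilityMeasure ν₂] :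
    klDiv π.fst ν₁ + klDiv π.snd ν₂ ≤ klDiv π (ν₁.prod ν₂) := by
  have : Nonempty Y := (nonempty_of_isProbabilityMeasure π).map Prod.snd
  have hchain := klDiv_compProd_eq_add π.fst ν₁ π.condKernel (Kernel.const X ν₂)
  rw [π.disintegrate, Measure.compProd_const, Measure.compProd_const] at hchain
  rw [hchain]
  gcongr
  simpa [Measure.snd, Measure.map_snd_prod] using
    klDiv_map_le π (π.fst.prod ν₂) measurable_snd

lemma fst_withDensity_prod {ν₁ : Measure X} {ν₂ : Measure Y} [SFinite ν₁] [SFinite ν₂]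
    {f : X × Y → ℝ≥0∞} (hf : AEMeasurable f (ν₁.prod ν₂)) :
    ((ν₁.prod ν₂).withDensity f).fst = ν₁.withDensity fun x ↦ ∫⁻ y, f (x, y) ∂ν₂ := by
  ext s hs
  rw [Measure.fst_apply hs, withDensity_apply _ (measurable_fst hs), withDensity_apply _ hs]
  have hf' := hf.restrict (s := Prod.fst ⁻¹' s)
  rw [← Set.prod_univ, ← Measure.prod_restrict, Measure.restrict_univ] at hf' ⊢
  exact lintegral_prod _ hf'

lemma snd_withDensity_prod {ν₁ : Measure X} {ν₂ : Measure Y} [SFinite ν₁] [SFinite ν₂]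
    {f : X × Y → ℝ≥0∞} (hf : AEMeasurable f (ν₁.prod ν₂)) :
    ((ν₁.prod ν₂).withDensity f).snd = ν₂.withDensity fun y ↦ ∫⁻ x, f (x, y) ∂ν₁ := by
  ext s hs
  rw [Measure.snd_apply hs, withDensity_apply _ (measurable_snd hs), withDensity_apply _ hs]
  have hf' := hf.restrict (s := Prod.snd ⁻¹' s)
  rw [← Set.univ_prod, ← Measure.prod_restrict, Measure.restrict_univ] at hf' ⊢
  exact lintegral_prod_symm _ hf'

lemma klDiv_withDensity {ν : Measure X} [IsFiniteMeasure ν] {f : X → ℝ≥0∞}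
    (hf : AEMeasurable f ν) (hfin : ∫⁻ x, f x ∂ν ≠ ⊤) :
    klDiv (ν.withDensity f) ν = ∫⁻ x, ENNReal.ofReal (klFun (f x).toReal) ∂ν := by
  have := isFiniteMeasure_withDensity hfin
  rw [klDiv_eq_lintegral_klFun_of_ac (withDensity_absolutelyContinuous _ _)]
  refine lintegral_congr_ae ?_
  filter_upwards [Measure.rnDeriv_withDensity₀ ν hf] with x hx
  rw [hx]

lemma ofReal_klFun_add {y : ℝ} (hy : 0 ≤ y) :
    ENNReal.ofReal (klFun y) + (ENNReal.ofReal (-(y * Real.log y)) + ENNReal.ofReal y) =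
      ENNReal.ofReal (y * Real.log y) + 1 := by
  have := klFun_nonneg hy
  rw [klFun_apply] at this ⊢
  rcases le_total 0 (y * Real.log y) with h | h
  · rw [ENNReal.ofReal_of_nonpos (neg_nonpos.2 h), zero_add, ← ENNReal.ofReal_add this hy,
      ← ENNReal.ofReal_one, ← ENNReal.ofReal_add h zero_le_one]
    ring_nf
  · rw [ENNReal.ofReal_of_nonpos h, zero_add, ← ENNReal.ofReal_one,
      ← ENNReal.ofReal_add (by linarith) hy, ← ENNReal.ofReal_add this (by linarith)]
    ring_nf

lemma lintegral_neg_xlogx_ne_top (ν : Measure X) [IsFiniteMeasure ν] (f : X → ℝ≥0∞) :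
    ∫⁻ x, ENNReal.ofReal (-xlogx (f x)) ∂ν ≠ ⊤ := by
  refine ((lintegral_mono fun x ↦ ?_).trans_lt (b := ∫⁻ _, 1 ∂ν) (by simp)).ne
  have := klFun_nonneg (f x).toReal_nonneg
  rw [klFun_apply] at this
  rw [ENNReal.ofReal_le_one, xlogx]
  linarith [(f x).toReal_nonneg]

lemma klDiv_withDensity_add_lintegral_neg_xlogx {ν : Measure X} [IsProbabilityMeasure ν]
    {f : X → ℝ≥0∞} (hf : AEMeasurable f ν) (hf1 : ∫⁻ x, f x ∂ν = 1) :
    klDiv (ν.withDensity f) ν + ∫⁻ x, ENNReal.ofReal (-xlogx (f x)) ∂ν =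
      ∫⁻ x, ENNReal.ofReal (xlogx (f x)) ∂ν := by
  have hkl : AEMeasurable (fun x ↦ ENNReal.ofReal (klFun (f x).toReal)) ν :=
    (measurable_klFun.comp_aemeasurable hf.ennreal_toReal).ennreal_ofReal
  have hfin : ∀ᵐ x ∂ν, f x < ⊤ := ae_lt_top' hf (by simp [hf1])
  rw [← ENNReal.add_left_inj ENNReal.one_ne_top, add_assoc,
    klDiv_withDensity hf (by simp [hf1])]
  nth_rw 1 [← hf1]
  rw [← lintegral_add_right' _ hf, ← lintegral_add_left' hkl]
  calc ∫⁻ x, ENNReal.ofReal (klFun (f x).toReal) + (ENNReal.ofReal (-xlogx (f x)) + f x) ∂ν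
      = ∫⁻ x, ENNReal.ofReal (xlogx (f x)) + 1 ∂ν := by
        refine lintegral_congr_ae ?_
        filter_upwards [hfin] with x hx
        simpa [xlogx, ENNReal.ofReal_toReal hx.ne] using ofReal_klFun_add (f x).toReal_nonneg
    _ = _ := by rw [lintegral_add_right _ measurable_const, lintegral_one, measure_univ]

lemma two_mul_ofReal_klFun_midpoint_lt {a b : ℝ≥0∞} (ha : a ≠ ⊤) (hb : b ≠ ⊤) (hab : a ≠ b) :
    2 * ENNReal.ofReal (klFun (2⁻¹ * (a + b)).toReal) <
      ENNReal.ofReal (klFun a.toReal) + ENNReal.ofReal (klFun b.toReal) := by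
  have hne : a.toReal ≠ b.toReal := (ENNReal.toReal_eq_toReal_iff' ha hb).not.2 hab
  have hlt := strictConvexOn_klFun.2 (Set.mem_Ici.2 a.toReal_nonneg) b.toReal_nonneg hne
    (by norm_num : (0 : ℝ) < 2⁻¹) (by norm_num : (0 : ℝ) < 2⁻¹) (by norm_num)
  have hmid : 0 ≤ klFun (2⁻¹ * (a.toReal + b.toReal)) := klFun_nonneg (by positivity)
  simp only [smul_eq_mul, ← mul_add] at hlt
  rw [ENNReal.toReal_mul, ENNReal.toReal_inv, ENNReal.toReal_ofNat, ENNReal.toReal_add ha hb,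
    ← ENNReal.ofReal_add (klFun_nonneg (by positivity)) (klFun_nonneg (by positivity)),
    ← ENNReal.ofReal_ofNat 2, ← ENNReal.ofReal_mul zero_le_two]
  exact (ENNReal.ofReal_lt_ofReal_iff_of_nonneg (by positivity)).2 (by linarith)

lemma ae_eq_of_klDiv_add_le_two_mul_midpoint {ν : Measure X} [IsFiniteMeasure ν]
    {f g : X → ℝ≥0∞} (hf : AEMeasurable f ν) (hg : AEMeasurable g ν)
    (hf_fin : ∫⁻ x, f x ∂ν ≠ ⊤) (hg_fin : ∫⁻ x, g x ∂ν ≠ ⊤)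
    (hkf : klDiv (ν.withDensity f) ν ≠ ⊤) (hkg : klDiv (ν.withDensity g) ν ≠ ⊤)
    (h : klDiv (ν.withDensity f) ν + klDiv (ν.withDensity g) ν ≤
      2 * klDiv (ν.withDensity fun x ↦ 2⁻¹ * (f x + g x)) ν) : f =ᵐ[ν] g := by
  have hm : AEMeasurable (fun x ↦ 2⁻¹ * (f x + g x)) ν := (hf.add hg).const_mul _
  have hm_fin : ∫⁻ x, 2⁻¹ * (f x + g x) ∂ν ≠ ⊤ := by
    rw [lintegral_const_mul' _ _ (by simp), lintegral_add_left' hf]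
    finiteness
  have hmeas {k : X → ℝ≥0∞} (hk : AEMeasurable k ν) :
      AEMeasurable (fun x ↦ ENNReal.ofReal (klFun (k x).toReal)) ν :=
    (measurable_klFun.comp_aemeasurable hk.ennreal_toReal).ennreal_ofReal
  rw [klDiv_withDensity hf hf_fin] at h hkf
  rw [klDiv_withDensity hg hg_fin] at h hkg
  rw [klDiv_withDensity hm hm_fin, ← lintegral_add_left' (hmeas hf),
    ← lintegral_const_mul'' _ (hmeas hm)] at h
  have hle : ∀ᵐ x ∂ν, 2 * ENNReal.ofReal (klFun (2⁻¹ * (f x + g x)).toReal) ≤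
      ENNReal.ofReal (klFun (f x).toReal) + ENNReal.ofReal (klFun (g x).toReal) := by
    filter_upwards [ae_lt_top' hf hf_fin, ae_lt_top' hg hg_fin] with x hfx hgx
    rcases eq_or_ne (f x) (g x) with heq | hne
    · rw [heq, ← two_mul, ← two_mul, ENNReal.inv_mul_cancel_left two_ne_zero (by simp)]
    · exact (two_mul_ofReal_klFun_midpoint_lt hfx.ne hgx.ne hne).le
  have hfin : ∫⁻ x, 2 * ENNReal.ofReal (klFun (2⁻¹ * (f x + g x)).toReal) ∂ν ≠ ⊤ := by
    refine ((lintegral_mono_ae hle).trans_lt ?_).ne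
    rw [lintegral_add_left' (hmeas hf)]
    finiteness
  filter_upwards [ae_lt_top' hf hf_fin, ae_lt_top' hg hg_fin,
    ae_eq_of_ae_le_of_lintegral_le hle hfin ((hmeas hf).add (hmeas hg)) h] with x hfx hgx hx
  by_contra hne
  exact (two_mul_ofReal_klFun_midpoint_lt hfx.ne hgx.ne hne).ne hx

end RelativeEntropy

section LogConvex

variable {α β : Type} {P : Set (α → ℝ)} {u w : (α → ℝ) → ℝ≥0∞}

/-- The regularity part of membership in `ℳ^{exp,p}(P)`: `u` is lower semicontinuous, positive
and log-convex on `P`, with no integrability or normalization required. -/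
structure IsLogConvexLSC (P : Set (α → ℝ)) (u : (α → ℝ) → ℝ≥0∞) : Prop where
  lsc : LowerSemicontinuousOn u P
  pos : ∀ x ∈ P, 0 < u x
  logConvex : LogConvexOn P u

namespace IsLogConvexLSC

lemma mul (hu : IsLogConvexLSC P u) (hw : IsLogConvexLSC P w) :
    IsLogConvexLSC P fun x ↦ u x * w x where
  lsc := by
    have hu' := hu.lsc.le_liminf
    have hw' := hw.lsc.le_liminf
    exact lowerSemicontinuousOn_iff_le_liminf.2 fun x hx ↦
      (mul_le_mul' (hu' x hx) (hw' x hx)).trans ENNReal.le_liminf_mul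
  pos x hx := ENNReal.mul_pos (hu.pos x hx).ne' (hw.pos x hx).ne'
  logConvex x hx y hy t ht₀ ht₁ := by
    rw [ENNReal.mul_rpow_of_nonneg _ _ ht₀, ENNReal.mul_rpow_of_nonneg _ _ (sub_nonneg.2 ht₁),
      mul_mul_mul_comm]
    exact mul_le_mul' (hu.logConvex hx hy ht₀ ht₁) (hw.logConvex hx hy ht₀ ht₁)

lemma comp_affineMap [Finite α] [Finite β] {Q : Set (β → ℝ)} (hu : IsLogConvexLSC P u)
    (A : (β → ℝ) →ᵃ[ℝ] (α → ℝ)) (hA : Set.MapsTo A Q P) : IsLogConvexLSC Q (u ∘ A) where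
  lsc := by
    have := Fintype.ofFinite α
    have := Fintype.ofFinite β
    exact hu.lsc.comp A.continuous_of_finiteDimensional.continuousOn hA
  pos x hx := hu.pos _ (hA hx)
  logConvex x hx y hy t ht₀ ht₁ := by
    have hA_comb : A ((1 - t) • x + t • y) = (1 - t) • A x + t • A y :=
      Convex.combo_affine_apply (by ring)
    simpa [hA_comb] using hu.logConvex (hA hx) (hA hy) ht₀ ht₁

/- Fatou's lemma gives semicontinuity of the integral, Hölder's inequality its log-convexity. -/
lemma lintegral [Countable α] {Y : Type*} [MeasurableSpace Y] {ν : Measure Y} [NeZero ν]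
    {v : Y → (α → ℝ) → ℝ≥0∞} (hv : ∀ᵐ y ∂ν, IsLogConvexLSC P (v y))
    (hmeas : ∀ x ∈ P, AEMeasurable (fun y ↦ v y x) ν) :
    IsLogConvexLSC P fun x ↦ ∫⁻ y, v y x ∂ν where
  lsc := by
    rw [← lowerSemicontinuous_restrict_iff, lowerSemicontinuous_iff_le_liminf]
    intro x
    refine le_trans (lintegral_mono_ae ?_) (lintegral_liminf_le' fun z : P ↦ hmeas z z.2)
    filter_upwards [hv] with y hy
    exact (lowerSemicontinuous_restrict_iff.2 hy.lsc).le_liminf x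
  pos x hx := by
    rw [pos_iff_ne_zero, Ne, lintegral_eq_zero_iff' (hmeas x hx)]
    intro hzero
    obtain ⟨y, hy, hy₀⟩ := (hv.and hzero).exists
    exact (hy.pos x hx).ne' hy₀
  logConvex x hx y hy t ht₀ ht₁ := by
    refine le_trans (lintegral_mono_ae ?_) (ENNReal.lintegral_mul_norm_pow_le (hmeas x hx)
      (hmeas y hy) (sub_nonneg.2 ht₁) ht₀ (by ring))
    filter_upwards [hv] with z hz
    exact hz.logConvex hx hy ht₀ ht₁

lemma midpoint [Countable α] (hu : IsLogConvexLSC P u) (hw : IsLogConvexLSC P w) :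
    IsLogConvexLSC P fun x ↦ 2⁻¹ * (u x + w x) := by
  have : NeZero ((2⁻¹ : ℝ≥0∞) • (Measure.count : Measure Bool)) :=
    ⟨by simp⟩
  have hmean := lintegral (ν := (2⁻¹ : ℝ≥0∞) • (Measure.count : Measure Bool))
    (v := fun b ↦ cond b u w) (.of_forall fun b ↦ by cases b <;> assumption)
    fun _ _ ↦ (measurable_of_countable _).aemeasurable
  simpa [lintegral_count, tsum_bool, add_comm] using hmean

lemma measurable_indicator [Countable α] (hu : IsLogConvexLSC P u) (hP : MeasurableSet P) :
    Measurable (P.indicator u) := by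
  classical
  rw [← Set.piecewise_eq_indicator]
  refine measurable_of_restrict_of_restrict_compl hP ?_ ?_
  · rw [Set.domRestrict_piecewise]
    exact (lowerSemicontinuous_restrict_iff.2 hu.lsc).measurable
  · rw [Set.domRestrict_piecewise_compl]
    exact measurable_zero

lemma aemeasurable [Countable α] (hu : IsLogConvexLSC P u) (hP : MeasurableSet P)
    {ν : Measure (α → ℝ)} (hν : ∀ᵐ x ∂ν, x ∈ P) : AEMeasurable u ν := by
  refine (hu.measurable_indicator hP).aemeasurable.congr ?_
  filter_upwards [hν] with x hx
  exact Set.indicator_of_mem hx u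

end IsLogConvexLSC

end LogConvex

section AlmostEverywhereEquality

variable {α : Type} {P : Set (α → ℝ)} {u w : (α → ℝ) → ℝ≥0∞}

lemma tendsto_rpow_one_sub_mul_rpow {a b : ℝ≥0∞} (ha₀ : a ≠ 0) (ha : a ≠ ⊤) (hb₀ : b ≠ 0)
    (hb : b ≠ ⊤) : Tendsto (fun t : ℝ ↦ a ^ (1 - t) * b ^ t) (𝓝 0) (𝓝 a) := by
  lift a to ℝ≥0 using ha
  lift b to ℝ≥0 using hb
  simp only [Ne, ENNReal.coe_eq_zero] at ha₀ hb₀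
  have hcoe (t : ℝ) : (a : ℝ≥0∞) ^ (1 - t) * (b : ℝ≥0∞) ^ t = ↑(a ^ (1 - t) * b ^ t) := by
    rw [ENNReal.coe_mul, ENNReal.coe_rpow_of_ne_zero ha₀, ENNReal.coe_rpow_of_ne_zero hb₀]
  simp only [hcoe, ENNReal.tendsto_coe]
  have hid : Tendsto (fun t : ℝ ↦ t) (𝓝 0) (𝓝 0) := tendsto_id
  simpa using ((tendsto_const_nhds (x := a)).nnrpow (hid.const_sub 1) (Or.inl ha₀)).mul
    ((tendsto_const_nhds (x := b)).nnrpow hid (Or.inl hb₀))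

lemma ae_restrict_segment_mem {E : Type*} [NormedAddCommGroup E] [NormedSpace ℝ E]
    [FiniteDimensional ℝ E] [MeasurableSpace E] [BorelSpace E] {μ : Measure E}
    [μ.IsAddHaarMeasure] {s : Set E} (hs : Convex ℝ s) (hsm : MeasurableSet s) {p : E → Prop}
    (hp : ∀ᵐ z ∂μ.restrict s, p z) {x : E} (hx : x ∈ s) {t : ℝ} (ht₀ : 0 < t) (ht₁ : t ≤ 1) :
    ∀ᵐ z ∂μ.restrict s, p ((1 - t) • x + t • z) := by
  rw [ae_restrict_iff' hsm] at hp ⊢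
  have hqmp : Measure.QuasiMeasurePreserving (fun z ↦ (1 - t) • x + t • z) μ μ :=
    (measurePreserving_add_left μ ((1 - t) • x)).quasiMeasurePreserving.comp
      (Measure.quasiMeasurePreserving_smul μ ht₀.ne')
  filter_upwards [hqmp.ae hp] with z hz hzs
  exact hz (hs hx hzs (sub_nonneg.2 ht₁) ht₀.le (by ring))

namespace IsLogConvexLSC

/- `u x` is at most the lower limit of `w` along the segment, which log-convexity bounds by
`lim (w x) ^ (1 - t) * (w z) ^ t = w x`. -/
lemma le_of_frequently_le (hP : Convex ℝ P) (hu : LowerSemicontinuousOn u P)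
    (hw : IsLogConvexLSC P w) {x z : α → ℝ} (hx : x ∈ P) (hz : z ∈ P) (hwz : w z ≠ ⊤)
    (hle : ∃ᶠ t : ℝ in 𝓝[>] 0, u ((1 - t) • x + t • z) ≤ w ((1 - t) • x + t • z)) :
    u x ≤ w x := by
  by_cases hwx : w x = ⊤
  · simp [hwx]
  by_contra! hlt
  obtain ⟨b, hwb, hbu⟩ := exists_between hlt
  have hunit : ∀ᶠ t : ℝ in 𝓝[>] 0, t ∈ Set.Ioc (0 : ℝ) 1 :=
    Ioc_mem_nhdsGT zero_lt_one
  have hseg : Tendsto (fun t : ℝ ↦ (1 - t) • x + t • z) (𝓝[>] 0) (𝓝[P] x) := by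
    refine tendsto_nhdsWithin_iff.2 ⟨tendsto_nhdsWithin_of_tendsto_nhds ?_, ?_⟩
    · exact Continuous.tendsto' (by fun_prop) _ _ (by simp)
    · filter_upwards [hunit] with t ht
      exact hP hx hz (sub_nonneg.2 ht.2) ht.1.le (by ring)
  have hgeo : ∀ᶠ t : ℝ in 𝓝[>] 0, w x ^ (1 - t) * w z ^ t < b :=
    (tendsto_nhdsWithin_of_tendsto_nhds (tendsto_rpow_one_sub_mul_rpow (hw.pos x hx).ne' hwx
      (hw.pos z hz).ne' hwz)).eventually (gt_mem_nhds hwb)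
  obtain ⟨t, ht, hbt, htb, ht01⟩ :=
    (hle.and_eventually ((hseg.eventually (hu x hx b hbu)).and (hgeo.and hunit))).exists
  exact (hbt.trans_le ht).not_ge ((hw.logConvex hx hz ht01.1.le ht01.2).trans htb.le)

lemma eqOn_of_ae_eq [Fintype α] (hP : Convex ℝ P) (hPm : MeasurableSet P) (hP₀ : volume P ≠ 0)
    (hu : IsLogConvexLSC P u) (hw : IsLogConvexLSC P w)
    (hfin : ∀ᵐ x ∂volume.restrict P, u x ≠ ⊤) (heq : u =ᵐ[volume.restrict P] w) :
    Set.EqOn u w P := by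
  intro x hx
  have hseg : ∀ᵐ z ∂volume.restrict P, ∀ k : ℕ,
      u ((1 - 1 / ((k : ℝ) + 1)) • x + (1 / ((k : ℝ) + 1)) • z) =
        w ((1 - 1 / ((k : ℝ) + 1)) • x + (1 / ((k : ℝ) + 1)) • z) :=
    ae_all_iff.2 fun k ↦ ae_restrict_segment_mem hP hPm heq hx Nat.one_div_pos_of_nat <| by
      simpa using Nat.one_div_le_one_div (α := ℝ) (Nat.zero_le k)
  have : (ae (volume.restrict P)).NeBot := by simpa [ae_neBot] using hP₀
  obtain ⟨z, hseg, hzP, hz, hz_fin⟩ :=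
    (hseg.and ((ae_restrict_mem hPm).and (heq.and hfin))).exists
  have htends : Tendsto (fun k : ℕ ↦ 1 / ((k : ℝ) + 1)) atTop (𝓝[>] 0) :=
    tendsto_nhdsWithin_iff.2 ⟨tendsto_one_div_add_atTop_nhds_zero_nat,
      .of_forall fun _ ↦ Set.mem_Ioi.2 Nat.one_div_pos_of_nat⟩
  have hfreq : ∃ᶠ t : ℝ in 𝓝[>] 0, u ((1 - t) • x + t • z) = w ((1 - t) • x + t • z) :=
    htends.frequently (.of_forall hseg)
  refine (le_of_frequently_le hP hu.lsc hw hx hzP (hz ▸ hz_fin) ?_).antisymm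
    (le_of_frequently_le hP hw.lsc hu hx hzP hz_fin (hfreq.mono fun _ ↦ ge_of_eq))
  exact hfreq.mono fun _ ↦ le_of_eq

end IsLogConvexLSC

end AlmostEverywhereEquality

section Polyhedron

variable {E : Type*} [NormedAddCommGroup E] [NormedSpace ℝ E] {P : Set E} {L : E →ᵃ[ℝ] ℝ}

lemma affineMap_add_smul (L : E →ᵃ[ℝ] ℝ) (x v : E) (s : ℝ) :
    L (x + s • v) = L x + s * L.linear v := by
  simpa [add_comm] using L.map_vadd x (s • v)

lemma affineMap_pos_of_mem_interior (hL : L ≠ 0)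
    (hnonneg : ∀ y ∈ P, 0 ≤ L y) {x : E} (hx : x ∈ interior P) : 0 < L x := by
  by_cases hlin : L.linear = 0
  · obtain ⟨c, rfl⟩ := L.linear_eq_zero_iff_exists_const.1 hlin
    refine (hnonneg x (interior_subset hx)).lt_of_ne' fun hc ↦ hL ?_
    ext
    exact hc
  · have hopen : IsOpenMap L := AffineMap.isOpenMap_linear_iff.1 <|
      L.linear.isOpenMap_of_finiteDimensional (LinearMap.surjective hlin)
    have himage : L '' interior P ⊆ interior (Set.Ici 0) :=
      interior_maximal (Set.image_subset_iff.2 fun y hy ↦ hnonneg y (interior_subset hy))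
        (hopen _ isOpen_interior)
    rw [interior_Ici] at himage
    exact himage ⟨x, hx, rfl⟩

/-- The convex polyhedron cut out by finitely many affine inequalities `0 ≤ L x`. -/
def polyhedron (K : Finset (E →ᵃ[ℝ] ℝ)) : Set E := {x | ∀ L ∈ K, 0 ≤ L x}

variable {K : Finset (E →ᵃ[ℝ] ℝ)}

lemma frontier_polyhedron_subset [FiniteDimensional ℝ E] (K : Finset (E →ᵃ[ℝ] ℝ)) :
    frontier (polyhedron K) ⊆ ⋃ L ∈ K, {x ∈ polyhedron K | L x = 0} := by
  intro x hx
  have hclosed : IsClosed (polyhedron K) := by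
    simp only [polyhedron, Set.ofPred_forall]
    exact isClosed_biInter fun L _ ↦
      isClosed_le continuous_const L.continuous_of_finiteDimensional
  have hxK := hclosed.frontier_subset hx
  by_contra hcon
  simp only [Set.mem_iUnion, not_exists] at hcon
  have hev : ∀ᶠ y in 𝓝 x, ∀ L ∈ K, 0 < L y := (eventually_all_finset K).2 fun L hL ↦
    L.continuous_of_finiteDimensional.continuousAt.eventually <|
      lt_mem_nhds ((hxK L hL).lt_of_ne' fun h ↦ hcon L hL ⟨hxK, h⟩)
  exact hx.2 (mem_interior_iff_mem_nhds.2 (hev.mono fun y hy L hL ↦ (hy L hL).le))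

lemma exists_neg_of_minimal (hK : Minimal (fun K' ↦ polyhedron K' = P) K) (hL : L ∈ K) :
    ∃ z, L z < 0 ∧ ∀ L' ∈ K, L' ≠ L → 0 ≤ L' z := by
  classical
  by_contra! hcon
  have herase : polyhedron (K.erase L) = P := by
    rw [← hK.1]
    ext x
    refine ⟨fun hx L' hL' ↦ ?_, fun hx L' hL' ↦ hx L' (Finset.mem_of_mem_erase hL')⟩
    rcases eq_or_ne L' L with rfl | hne
    · by_contra! hneg
      obtain ⟨L'', hL'', hne, hlt⟩ := hcon x hneg
      exact hlt.not_ge (hx L'' (Finset.mem_erase.2 ⟨hne, hL''⟩))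
    · exact hx L' (Finset.mem_erase.2 ⟨hne, hL'⟩)
  exact Finset.notMem_erase L K (hK.2 herase (Finset.erase_subset _ _) hL)

/- Join a point of the interior to a point violating only the inequality of `L`. -/
lemma exists_zero_of_minimal (hint : (interior P).Nonempty) (hK₀ : ∀ L ∈ K, L ≠ 0)
    (hK : Minimal (fun K' ↦ polyhedron K' = P) K) (hL : L ∈ K) :
    ∃ w, L w = 0 ∧ ∀ L' ∈ K, L' ≠ L → 0 < L' w := by
  obtain ⟨x, hx⟩ := hint
  obtain ⟨z, hz, hz'⟩ := exists_neg_of_minimal hK hL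
  have hpos : ∀ L' ∈ K, 0 < L' x := fun L' hL' ↦
    affineMap_pos_of_mem_interior (hK₀ L' hL')
      (fun y hy ↦ (hK.1.symm ▸ hy : y ∈ polyhedron K) L' hL') hx
  have hd : 0 < L x - L z := by linarith [hpos L hL]
  have hcombo (L' : E →ᵃ[ℝ] ℝ) : L' ((-L z / (L x - L z)) • x + (L x / (L x - L z)) • z) =
      (-L z / (L x - L z)) • L' x + (L x / (L x - L z)) • L' z :=
    Convex.combo_affine_apply (by field_simp; ring)
  refine ⟨_, (hcombo L).trans ?_, fun L' hL' hne ↦ ?_⟩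
  · simp only [smul_eq_mul]
    ring
  · rw [hcombo]
    have := hpos L hL
    have := hpos L' hL'
    have := hz' L' hL' hne
    have : 0 < -L z := by linarith
    simp only [smul_eq_mul]
    positivity

lemma vectorSpan_polyhedron_inter_hyperplane {w : E} (hL : L ∈ K) (hw : L w = 0)
    (hpos : ∀ L' ∈ K, L' ≠ L → 0 < L' w) :
    vectorSpan ℝ {x ∈ polyhedron K | L x = 0} = LinearMap.ker L.linear := by
  apply le_antisymm
  · rw [vectorSpan_def, Submodule.span_le]
    rintro _ ⟨a, ⟨-, ha⟩, b, ⟨-, hb⟩, rfl⟩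
    rw [SetLike.mem_coe, LinearMap.mem_ker, L.linearMap_vsub, ha, hb, vsub_self]
  · intro v hv
    have hmove (s : ℝ) : L (w + s • v) = 0 := by
      rw [affineMap_add_smul, hw, LinearMap.mem_ker.1 hv, mul_zero, add_zero]
    have hnear : ∀ᶠ s : ℝ in 𝓝[>] 0, ∀ L' ∈ K, 0 ≤ L' (w + s • v) := by
      refine (eventually_all_finset K).2 fun L' hL' ↦ ?_
      rcases eq_or_ne L' L with rfl | hne
      · exact .of_forall fun s ↦ (hmove s).ge
      · have hcont : Continuous fun s : ℝ ↦ L' (w + s • v) := by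
          simp only [affineMap_add_smul]
          fun_prop
        have hlim : Tendsto (fun s : ℝ ↦ L' (w + s • v)) (𝓝[>] 0) (𝓝 (L' w)) :=
          tendsto_nhdsWithin_of_tendsto_nhds (hcont.tendsto' _ _ (by simp))
        exact (hlim.eventually (lt_mem_nhds (hpos L' hL' hne))).mono fun s hs ↦ hs.le
    obtain ⟨s, hs, hs₀ : 0 < s⟩ := (hnear.and self_mem_nhdsWithin).exists
    have hwK : w ∈ polyhedron K := fun L' hL' ↦ by
      rcases eq_or_ne L' L with rfl | hne
      exacts [hw.ge, (hpos L' hL' hne).le]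
    have hdir : s • v ∈ vectorSpan ℝ {x ∈ polyhedron K | L x = 0} := by
      simpa using vsub_mem_vectorSpan ℝ (s := {x ∈ polyhedron K | L x = 0})
        (p₁ := w + s • v) (p₂ := w) ⟨hs, hmove s⟩ ⟨hwK, hw⟩
    exact (Submodule.smul_mem_iff _ hs₀.ne').1 hdir

end Polyhedron

section Face

variable {α : Type} [Finite α] {P F : Set (α → ℝ)}

lemma IsFaceOf.isCompact (hF : IsFaceOf P F) (hP : IsCompact P) : IsCompact F := by
  have := Fintype.ofFinite α
  obtain ⟨L, -, -, rfl⟩ := hF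
  exact hP.inter_right (isClosed_eq L.continuous_of_finiteDimensional continuous_const)

lemma IsFaceOf.exists_linearMap_eq_one (hF : IsFaceOf P F) {x : α → ℝ} (hx : x ∈ interior P) :
    ∃ l : (α → ℝ) →ₗ[ℝ] ℝ, F = {y ∈ P | l (y - x) = 1} := by
  have := Fintype.ofFinite α
  obtain ⟨L, hL, hnonneg, rfl⟩ := hF
  have hpos := affineMap_pos_of_mem_interior hL hnonneg hx
  refine ⟨-(L x)⁻¹ • L.linear, ?_⟩
  ext y
  have hlin : L.linear (y - x) = L y - L x := L.linearMap_vsub y x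
  refine and_congr_right fun _ ↦ ?_
  rw [LinearMap.smul_apply, hlin, smul_eq_mul]
  field_simp
  grind

end Face

section Polytope

variable {P : Set (ι → ℝ)} {K : Finset ((ι → ℝ) →ᵃ[ℝ] ℝ)} {L : (ι → ℝ) →ᵃ[ℝ] ℝ}

lemma IsPolytope.exists_minimal_polyhedron (hP : IsPolytope P) :
    ∃ K, (∀ L ∈ K, L ≠ 0) ∧ Minimal (fun K' ↦ polyhedron K' = P) K := by
  obtain ⟨-, -, m, L, hL, rfl⟩ := hP
  obtain ⟨K, hKL, hK⟩ := exists_minimal_le_of_wellFoundedLT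
    (fun K' ↦ polyhedron K' = ⋂ k, {x | 0 ≤ L k x}) (Set.finite_range L).toFinset
    (by ext x; simp [polyhedron])
  refine ⟨K, fun L' hL' ↦ ?_, hK⟩
  obtain ⟨k, rfl⟩ := (Set.finite_range L).mem_toFinset.1 (hKL hL')
  exact hL k

lemma isFacetOf_of_minimal (hint : (interior P).Nonempty) (hK₀ : ∀ L ∈ K, L ≠ 0)
    (hK : Minimal (fun K' ↦ polyhedron K' = P) K) (hL : L ∈ K) :
    IsFacetOf P {x ∈ P | L x = 0} := by
  obtain ⟨w, hw, hpos⟩ := exists_zero_of_minimal hint hK₀ hK hL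
  obtain ⟨z, hz, -⟩ := exists_neg_of_minimal hK hL
  have hlin : L.linear ≠ 0 := by
    intro hlin
    obtain ⟨c, rfl⟩ := L.linear_eq_zero_iff_exists_const.1 hlin
    exact hz.ne hw
  obtain rfl := hK.1
  refine ⟨⟨L, hK₀ L hL, fun y hy ↦ hy L hL, rfl⟩, ?_⟩
  rw [vectorSpan_polyhedron_inter_hyperplane hL hw hpos,
    Module.Dual.finrank_ker_add_one_of_ne_zero hlin, Module.finrank_pi]

lemma IsPolytope.frontier_subset_sUnion_facets (hP : IsPolytope P) :
    ∃ 𝓕 : Set (Set (ι → ℝ)), 𝓕.Finite ∧ (∀ F ∈ 𝓕, IsFacetOf P F) ∧ frontier P ⊆ ⋃₀ 𝓕 := by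
  obtain ⟨K, hK₀, hK⟩ := hP.exists_minimal_polyhedron
  refine ⟨(fun L : (ι → ℝ) →ᵃ[ℝ] ℝ ↦ {x ∈ P | L x = 0}) '' K, K.finite_toSet.image _, ?_, ?_⟩
  · rintro _ ⟨L, hL, rfl⟩
    exact isFacetOf_of_minimal hP.2.1 hK₀ hK hL
  · obtain rfl := hK.1
    simpa [Set.sUnion_image] using frontier_polyhedron_subset K

end Polytope

section Cone

lemma exists_continuousLinearEquiv_prod_restrict {α : Type*} [Finite α]
    {l : (α → ℝ) →ₗ[ℝ] ℝ} (hl : l ≠ 0) :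
    ∃ (i : α) (A : (α → ℝ) ≃L[ℝ] ℝ × ({j // j ≠ i} → ℝ)),
      ∀ x, A x = (l x, fun j : {j // j ≠ i} ↦ x j) := by
  classical
  have := Fintype.ofFinite α
  obtain ⟨i, hi⟩ : ∃ i, l (Pi.single i 1) ≠ 0 := by
    by_contra! hcon
    exact hl (LinearMap.pi_ext' fun i ↦ LinearMap.ext_ring (hcon i))
  let A : (α → ℝ) →ₗ[ℝ] ℝ × ({j // j ≠ i} → ℝ) := l.prod (LinearMap.funLeft ℝ ℝ Subtype.val)
  have hinj : Function.Injective A := by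
    refine (injective_iff_map_eq_zero A).2 fun x hx ↦ ?_
    have hsingle : x = x i • Pi.single i (1 : ℝ) := by
      ext j
      rcases eq_or_ne j i with rfl | hj
      · simp
      · have hxj : x j = 0 := congr_fun (congr_arg Prod.snd hx) ⟨j, hj⟩
        simp [hj, hxj]
    have hlx : x i * l (Pi.single i 1) = 0 := by
      rw [← smul_eq_mul, ← map_smul, ← hsingle]
      exact congr_arg Prod.fst hx
    rw [hsingle, (mul_eq_zero.1 hlx).resolve_right hi, zero_smul]
  have hdim : Module.finrank ℝ (α → ℝ) = Module.finrank ℝ (ℝ × ({j // j ≠ i} → ℝ)) := by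
    have : 0 < Fintype.card α := Fintype.card_pos_iff.2 ⟨i⟩
    simp only [Module.finrank_prod, Module.finrank_pi, Module.finrank_self, ne_eq,
      Fintype.card_subtype_compl, Fintype.card_unique]
    lia
  exact ⟨i, (LinearMap.linearEquivOfInjective A hinj hdim).toContinuousLinearEquiv, fun _ ↦ rfl⟩

lemma card_subtype_ne (i : ι) [Fintype {j // j ≠ i}] :
    (Fintype.card {j // j ≠ i} : ℝ) = Fintype.card ι - 1 := by
  classical
  have : 1 ≤ Fintype.card ι := Fintype.card_pos_iff.2 ⟨i⟩
  simp [Fintype.card_subtype_compl, Nat.cast_sub this]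

lemma lipschitzWith_restrict_sub (p : ι → Prop) [Fintype {j // p j}] (a : ι → ℝ) :
    LipschitzWith 1 fun (x : ι → ℝ) (j : {j // p j}) ↦ x j - a j :=
  .of_dist_le_mul fun x y ↦ by
    simpa [dist_pi_le_iff dist_nonneg] using fun j _ ↦ dist_le_pi_dist x y j

lemma hausdorffMeasure_lt_top_of_subset_hyperplane {l : (ι → ℝ) →ₗ[ℝ] ℝ} (hl : l ≠ 0) {c : ℝ}
    {F : Set (ι → ℝ)} (hF : Bornology.IsBounded F) (hlF : ∀ x ∈ F, l x = c) :
    Measure.hausdorffMeasure ((Fintype.card ι : ℝ) - 1) F < ⊤ := by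
  classical
  obtain ⟨i, A, hA⟩ := exists_continuousLinearEquiv_prod_restrict hl
  let r : (ι → ℝ) → {j // j ≠ i} → ℝ := fun x j ↦ x j
  have hr : LipschitzWith 1 r := by simpa using lipschitzWith_restrict_sub (· ≠ i) 0
  let s : ({j // j ≠ i} → ℝ) → ι → ℝ := fun y ↦ A.symm (c, y)
  have hs : LipschitzWith ‖(A.symm : ℝ × ({j // j ≠ i} → ℝ) →L[ℝ] (ι → ℝ))‖₊ s := by
    have hcomp := A.symm.lipschitz.comp (LipschitzWith.prodMk_left c)
    rwa [mul_one] at hcomp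
  have hsub : F ⊆ s '' (r '' F) := fun x hx ↦
    ⟨r x, ⟨x, hx, rfl⟩, (ContinuousLinearEquiv.symm_apply_eq A).2 (by rw [hA, hlF x hx])⟩
  rw [← card_subtype_ne i]
  refine (measure_mono hsub).trans_lt
    ((hs.hausdorffMeasure_image_le (Nat.cast_nonneg _) _).trans_lt ?_)
  rw [hausdorffMeasure_pi_real]
  exact ENNReal.mul_lt_top (ENNReal.rpow_lt_top_of_nonneg (Nat.cast_nonneg _) ENNReal.coe_ne_top)
    (hr.isBounded_image hF).measure_lt_top

lemma map_volume_le_hausdorffMeasure {X J : Type*} [Fintype J] [MeasurableSpace X]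
    [EMetricSpace X] [BorelSpace X] {r : X → J → ℝ} (hr : LipschitzWith 1 r)
    {ψ : (J → ℝ) → X} (hψ : Measurable ψ) (hrψ : Function.LeftInverse r ψ) :
    volume.map ψ ≤ Measure.hausdorffMeasure (Fintype.card J) := by
  refine Measure.le_iff.2 fun E hE ↦ ?_
  rw [Measure.map_apply hψ hE]
  calc volume (ψ ⁻¹' E) ≤ volume (r '' E) := measure_mono fun y hy ↦ ⟨ψ y, hy, hrψ y⟩
    _ = Measure.hausdorffMeasure (Fintype.card J) (r '' E) := by rw [hausdorffMeasure_pi_real]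
    _ ≤ Measure.hausdorffMeasure (Fintype.card J) E := by
      simpa using hr.hausdorffMeasure_image_le (Nat.cast_nonneg (Fintype.card J)) E

section ConvexJoin

variable {V : Type*} [AddCommGroup V] [Module ℝ V] {l : V →ₗ[ℝ] ℝ} {x₀ x b : V} {F : Set V}

lemma apply_mem_Icc_and_mem_of_mem_convexJoin (hlF : ∀ b ∈ F, l (b - x₀) = 1)
    (hx : x ∈ convexJoin ℝ {x₀} F) :
    l (x - x₀) ∈ Set.Icc 0 1 ∧ ∃ b ∈ F, x = AffineMap.lineMap x₀ b (l (x - x₀)) := by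
  obtain ⟨x', rfl, b, hb, hseg⟩ := mem_convexJoin.1 hx
  rw [segment_eq_image_lineMap] at hseg
  obtain ⟨t, ht, rfl⟩ := hseg
  have hlt : l (AffineMap.lineMap x' b t - x') = t := by
    simp [AffineMap.lineMap_apply, hlF b hb]
  rw [hlt]
  exact ⟨ht, b, hb, rfl⟩

lemma mem_of_lineMap_mem_convexJoin (hlF : ∀ b ∈ F, l (b - x₀) = 1) (hb : l (b - x₀) = 1)
    {t : ℝ} (ht : t ≠ 0) (h : AffineMap.lineMap x₀ b t ∈ convexJoin ℝ {x₀} F) : b ∈ F := by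
  obtain ⟨-, b', hb', h⟩ := apply_mem_Icc_and_mem_of_mem_convexJoin hlF h
  have hlt : l (AffineMap.lineMap x₀ b t - x₀) = t := by simp [AffineMap.lineMap_apply, hb]
  rw [hlt] at h
  have hbb' : b = b' := by simpa [AffineMap.lineMap_apply, ht] using h
  exact hbb' ▸ hb'

lemma setLIntegral_indicator_convexJoin_lineMap_le (hlF : ∀ b ∈ F, l (b - x₀) = 1)
    (hb : l (b - x₀) = 1) (g : V → ℝ≥0∞) :
    ∫⁻ t in Set.Ioc (0 : ℝ) 1, (convexJoin ℝ {x₀} F).indicator g (AffineMap.lineMap x₀ b t) ≤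
      F.indicator (fun b ↦ ∫⁻ t in Set.Ioc (0 : ℝ) 1, g (AffineMap.lineMap x₀ b t)) b := by
  by_cases hbF : b ∈ F
  · rw [Set.indicator_of_mem hbF]
    exact lintegral_mono fun t ↦ Set.indicator_le_self _ _ _
  · rw [Set.indicator_of_notMem hbF, nonpos_iff_eq_zero]
    exact setLIntegral_eq_zero measurableSet_Ioc fun t ht ↦ Set.indicator_of_notMem
      (fun hmem ↦ hbF (mem_of_lineMap_mem_convexJoin hlF hb ht.1.ne' hmem)) g

lemma isCompact_convexJoin_singleton {E : Type*} [NormedAddCommGroup E]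
    [NormedSpace ℝ E] {F : Set E} (hF : IsCompact F) (x₀ : E) :
    IsCompact (convexJoin ℝ {x₀} F) := by
  have himage : convexJoin ℝ {x₀} F =
      (fun p : ℝ × E ↦ AffineMap.lineMap x₀ p.2 p.1) '' Set.Icc (0 : ℝ) 1 ×ˢ F := by
    ext x
    simp only [convexJoin_singleton_left, Set.mem_iUnion, segment_eq_image_lineMap,
      Set.mem_image, Set.mem_prod, Prod.exists, exists_prop]
    grind
  rw [himage]
  refine (isCompact_Icc.prod hF).image ?_
  simp only [AffineMap.lineMap_apply_module]
  fun_prop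

lemma subset_insert_convexJoin_frontier {E : Type*} [NormedAddCommGroup E] [NormedSpace ℝ E]
    {s : Set E} (hs : IsCompact s) (x₀ : E) : s ⊆ insert x₀ (convexJoin ℝ {x₀} (frontier s)) := by
  intro x hx
  rcases eq_or_ne x x₀ with rfl | hne
  · exact Set.mem_insert x _
  right
  have hcont : Continuous (AffineMap.lineMap (k := ℝ) x₀ x) := AffineMap.lineMap_continuous
  have hembed : IsClosedEmbedding (AffineMap.lineMap (k := ℝ) x₀ x) :=
    (Homeomorph.addRight x₀).isClosedEmbedding.comp
      (isClosedEmbedding_smul_left (sub_ne_zero.2 hne))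
  obtain ⟨t, ⟨ht, hts⟩, hmax⟩ := ((hembed.isCompact_preimage hs).inter_left isClosed_Ici
    (s := Set.Ici 1)).exists_isGreatest ⟨1, Set.mem_Ici.2 le_rfl, by simpa using hx⟩
  have hfrontier : AffineMap.lineMap x₀ x t ∈ frontier s := by
    refine hs.isClosed.frontier_eq ▸ ⟨hts, fun hint ↦ ?_⟩
    have hnear : ∀ᶠ t' in 𝓝 t, AffineMap.lineMap x₀ x t' ∈ s :=
      hcont.continuousAt.preimage_mem_nhds (mem_interior_iff_mem_nhds.1 hint)
    obtain ⟨t', ht's, ht'⟩ :=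
      ((hnear.filter_mono nhdsWithin_le_nhds).and (self_mem_nhdsWithin (s := Set.Ioi t))).exists
    exact (hmax ⟨ht.trans ht'.le, ht's⟩).not_gt ht'
  refine mem_convexJoin.2 ⟨x₀, rfl, _, hfrontier, ?_⟩
  rw [segment_eq_image_lineMap]
  have ht₀ : 0 < t := one_pos.trans_le ht
  refine ⟨t⁻¹, ⟨by positivity, inv_le_one_of_one_le₀ ht⟩, ?_⟩
  simp [AffineMap.lineMap_apply, smul_smul, inv_mul_cancel₀ ht₀.ne']

end ConvexJoin

lemma measurable_setLIntegral_lineMap {E : Type*} [NormedAddCommGroup E] [NormedSpace ℝ E]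
    [FiniteDimensional ℝ E] [MeasurableSpace E] [BorelSpace E] {g : E → ℝ≥0∞} (hg : Measurable g)
    (x₀ : E) (I : Set ℝ) : Measurable fun b ↦ ∫⁻ t in I, g (AffineMap.lineMap x₀ b t) := by
  refine Measurable.lintegral_prod_right (f := fun b t ↦ g (AffineMap.lineMap x₀ b t))
    (hg.comp ?_)
  simp only [AffineMap.lineMap_apply_module]
  fun_prop

variable {E G : Type*} [NormedAddCommGroup E] [NormedSpace ℝ E]
  [MeasurableSpace E] [BorelSpace E] (μ : Measure E) [μ.IsAddHaarMeasure]
  [NormedAddCommGroup G] [NormedSpace ℝ G] [FiniteDimensional ℝ G]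
  [MeasurableSpace G] [BorelSpace G] (ν : Measure G) [ν.IsAddHaarMeasure]

lemma exists_lintegral_eq_lintegral_prod (A : E ≃L[ℝ] ℝ × G) :
    ∃ C : ℝ≥0∞, C ≠ ⊤ ∧ ∀ f : E → ℝ≥0∞, Measurable f →
      ∫⁻ x, f x ∂μ = C * ∫⁻ t : ℝ, ∫⁻ y, f (A.symm (t, y)) ∂ν := by
  have := A.isAddHaarMeasure_map μ
  have hmap := Measure.isAddLeftInvariant_eq_smul (μ.map A) ((volume : Measure ℝ).prod ν)
  set C := (μ.map A).addHaarScalarFactor ((volume : Measure ℝ).prod ν)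
  refine ⟨C, ENNReal.coe_ne_top, fun f hf ↦ ?_⟩
  have hfA : Measurable fun z ↦ f (A.symm z) := hf.comp A.symm.continuous.measurable
  calc ∫⁻ x, f x ∂μ = ∫⁻ z, f (A.symm z) ∂μ.map A := by
        simp [lintegral_map hfA A.continuous.measurable]
    _ = _ := by
        rw [hmap, lintegral_smul_measure, lintegral_prod _ hfA.aemeasurable]
        rfl

lemma lintegral_le_lintegral_comp_smul {f : G → ℝ≥0∞} (hf : Measurable f) {t : ℝ} (ht₀ : 0 < t)
    (ht₁ : t ≤ 1) : ∫⁻ y, f y ∂ν ≤ ∫⁻ y, f (t • y) ∂ν := by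
  rw [← lintegral_map hf (measurable_const_smul t), Measure.map_addHaar_smul _ ht₀.ne',
    lintegral_smul_measure]
  refine le_mul_of_one_le_left zero_le ?_
  rw [ENNReal.one_le_ofReal, abs_of_pos (by positivity)]
  exact (one_le_inv₀ (by positivity)).2 (pow_le_one₀ ht₀.le ht₁)

lemma lintegral_Ioc_lintegral_le {f : ℝ → G → ℝ≥0∞} (hf : Measurable (Function.uncurry f)) :
    ∫⁻ t in Set.Ioc (0 : ℝ) 1, ∫⁻ y, f t y ∂ν ≤
      ∫⁻ y, (∫⁻ t in Set.Ioc (0 : ℝ) 1, f t (t • y)) ∂ν := by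
  have hsmul : Measurable fun p : ℝ × G ↦ f p.1 (p.1 • p.2) :=
    hf.comp (measurable_fst.prodMk (measurable_fst.smul measurable_snd))
  calc ∫⁻ t in Set.Ioc (0 : ℝ) 1, ∫⁻ y, f t y ∂ν
    _ ≤ ∫⁻ t in Set.Ioc (0 : ℝ) 1, ∫⁻ y, f t (t • y) ∂ν :=
      setLIntegral_mono' measurableSet_Ioc fun t ht ↦
        lintegral_le_lintegral_comp_smul ν (hf.comp measurable_prodMk_left) ht.1 ht.2
    _ = ∫⁻ y, (∫⁻ t in Set.Ioc (0 : ℝ) 1, f t (t • y)) ∂ν :=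
      lintegral_lintegral_swap hsmul.aemeasurable

/- In the coordinates `A`, the slice of the cone at height `t` is `t` times its base. -/
lemma exists_setLIntegral_convexJoin_le_map [FiniteDimensional ℝ E] {l : E →ₗ[ℝ] ℝ} {x₀ : E}
    {A : E ≃L[ℝ] ℝ × G} (hA : ∀ x, (A x).1 = l x) {F : Set E} (hF : IsCompact F)
    (hlF : ∀ b ∈ F, l (b - x₀) = 1) :
    ∃ C : ℝ≥0∞, C ≠ ⊤ ∧ ∀ g : E → ℝ≥0∞, Measurable g →
      ∫⁻ x in convexJoin ℝ {x₀} F, g x ∂μ ≤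
        C * ∫⁻ b in F, (∫⁻ t in Set.Ioc (0 : ℝ) 1, g (AffineMap.lineMap x₀ b t))
          ∂ν.map fun y ↦ x₀ + A.symm (1, y) := by
  obtain ⟨C, hC, hμν⟩ := exists_lintegral_eq_lintegral_prod μ ν A
  refine ⟨C, hC, fun g hg ↦ ?_⟩
  have hK := (isCompact_convexJoin_singleton hF x₀).measurableSet
  set h : E → ℝ≥0∞ := (convexJoin ℝ {x₀} F).indicator g
  have hh : Measurable h := hg.indicator hK
  have hl (t : ℝ) (y : G) : l (x₀ + A.symm (t, y) - x₀) = t := by simp [← hA]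
  have hsupp : (fun t ↦ ∫⁻ y, h (x₀ + A.symm (t, y)) ∂ν).support ⊆ Set.Icc 0 1 := by
    refine fun t ↦ not_imp_comm.1 fun ht ↦ (lintegral_congr fun y ↦ ?_).trans lintegral_zero
    exact Set.indicator_of_notMem (fun hmem ↦ ht <| by
      simpa only [hl] using (apply_mem_Icc_and_mem_of_mem_convexJoin hlF hmem).1) g
  have hline (t : ℝ) (y : G) :
      x₀ + A.symm (t, t • y) = AffineMap.lineMap x₀ (x₀ + A.symm (1, y)) t := by
    rw [AffineMap.lineMap_apply, vsub_eq_sub, add_sub_cancel_left, ← map_smul, vadd_eq_add,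
      add_comm, Prod.smul_mk, smul_eq_mul, mul_one]
  have hA_symm : Measurable fun p ↦ x₀ + A.symm p :=
    (continuous_const.add A.symm.continuous).measurable
  have hψ : Measurable fun y ↦ x₀ + A.symm (1, y) := hA_symm.comp measurable_prodMk_left
  calc ∫⁻ x in convexJoin ℝ {x₀} F, g x ∂μ = ∫⁻ x, h (x₀ + x) ∂μ := by
        rw [lintegral_add_left_eq_self, lintegral_indicator hK]
    _ = C * ∫⁻ t in Set.Ioc (0 : ℝ) 1, ∫⁻ y, h (x₀ + A.symm (t, y)) ∂ν := by
        rw [hμν _ (by fun_prop), ← setLIntegral_eq_of_support_subset hsupp,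
          Measure.restrict_congr_set Ioc_ae_eq_Icc]
    _ ≤ C * ∫⁻ y, (∫⁻ t in Set.Ioc (0 : ℝ) 1, h (x₀ + A.symm (t, t • y))) ∂ν := by
        gcongr
        exact lintegral_Ioc_lintegral_le ν (hh.comp hA_symm)
    _ ≤ C * ∫⁻ y, F.indicator (fun b ↦ ∫⁻ t in Set.Ioc (0 : ℝ) 1, g (AffineMap.lineMap x₀ b t))
          (x₀ + A.symm (1, y)) ∂ν := by
        simp only [hline]
        gcongr with y
        exact setLIntegral_indicator_convexJoin_lineMap_le hlF (hl 1 y) g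
    _ = _ := by
        rw [← lintegral_indicator hF.measurableSet,
          lintegral_map ((measurable_setLIntegral_lineMap hg x₀ _).indicator hF.measurableSet) hψ]

lemma exists_setLIntegral_convexJoin_le {l : (ι → ℝ) →ₗ[ℝ] ℝ} {x₀ : ι → ℝ} {F : Set (ι → ℝ)}
    (hF : IsCompact F) (hlF : ∀ b ∈ F, l (b - x₀) = 1) :
    ∃ C : ℝ≥0∞, C ≠ ⊤ ∧ ∀ g : (ι → ℝ) → ℝ≥0∞, Measurable g →
      ∫⁻ x in convexJoin ℝ {x₀} F, g x ≤
        C * ∫⁻ b in F, (∫⁻ t in Set.Ioc (0 : ℝ) 1, g (AffineMap.lineMap x₀ b t))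
          ∂Measure.hausdorffMeasure ((Fintype.card ι : ℝ) - 1) := by
  classical
  rcases F.eq_empty_or_nonempty with rfl | ⟨b, hb⟩
  · exact ⟨0, ENNReal.zero_ne_top, fun g _ ↦ by simp⟩
  have hl : l ≠ 0 := by
    rintro rfl
    simpa using hlF b hb
  obtain ⟨i, A, hA⟩ := exists_continuousLinearEquiv_prod_restrict hl
  obtain ⟨C, hC, hle⟩ := exists_setLIntegral_convexJoin_le_map volume volume
    (fun x ↦ congr_arg Prod.fst (hA x)) hF hlF
  refine ⟨C, hC, fun g hg ↦ (hle g hg).trans ?_⟩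
  gcongr
  rw [← card_subtype_ne i]
  refine map_volume_le_hausdorffMeasure (lipschitzWith_restrict_sub (· ≠ i) x₀) (by fun_prop)
    fun y ↦ ?_
  have hy : y = fun j : {j // j ≠ i} ↦ A.symm (1, y) j := by
    simpa using congr_arg Prod.snd (hA (A.symm (1, y)))
  ext j
  simpa using (congr_fun hy j).symm

end Cone

section EntropyAlongSegments

lemma mul_log_le_of_le_mul_exp {c l t y : ℝ} (hc : 1 ≤ c) (hl : 0 ≤ l) (ht₁ : t ≤ 1)
    (hy₀ : 0 ≤ y) (hy : y ≤ c * Real.exp (t * l)) :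
    y * Real.log y ≤ Real.log c * (c * Real.exp l) + c * Real.exp (t * l) * l := by
  have hlog := Real.log_nonneg hc
  rcases le_total y 1 with hy₁ | hy₁
  · exact (mul_nonpos_of_nonneg_of_nonpos hy₀ (Real.log_nonpos hy₀ hy₁)).trans (by positivity)
  have htl : t * l ≤ l := mul_le_of_le_one_left hl ht₁
  calc y * Real.log y
    _ ≤ c * Real.exp (t * l) * Real.log (c * Real.exp (t * l)) := by
      gcongr
      exact Real.log_nonneg hy₁
    _ = Real.log c * (c * Real.exp (t * l)) + c * Real.exp (t * l) * (t * l) := by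
      rw [Real.log_mul (by positivity) (by positivity), Real.log_exp]
      ring
    _ ≤ Real.log c * (c * Real.exp l) + c * Real.exp (t * l) * l := by gcongr

lemma setLIntegral_ofReal_add_mul_exp_le {a c l : ℝ} (ha : 0 ≤ a) (hc : 0 ≤ c) (hl : 0 ≤ l) :
    ∫⁻ t in Set.Ioc (0 : ℝ) 1, ENNReal.ofReal (a + c * Real.exp (t * l) * l) ≤
      ENNReal.ofReal (a + c * Real.exp l) := by
  have hderiv (t : ℝ) : HasDerivAt (fun t ↦ a * t + c * Real.exp (t * l))
      (a + c * Real.exp (t * l) * l) t := by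
    have hexp := ((hasDerivAt_id t).mul_const l).exp.const_mul c
    exact (((hasDerivAt_id t).const_mul a).add hexp).congr_deriv (by simp only [id]; ring)
  have hcont : Continuous fun t : ℝ ↦ a + c * Real.exp (t * l) * l := by fun_prop
  rw [← ofReal_integral_eq_lintegral_ofReal hcont.integrableOn_Ioc
      (.of_forall fun t ↦ by simp only [Pi.zero_apply]; positivity),
    ← intervalIntegral.integral_of_le zero_le_one,
    intervalIntegral.integral_eq_sub_of_hasDerivAt (fun t _ ↦ hderiv t)
      (hcont.intervalIntegrable 0 1)]
  exact ENNReal.ofReal_le_ofReal (by simpa using hc)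

lemma setLIntegral_ofReal_xlogx_le {c : ℝ} (hc : 1 ≤ c) {M : ℝ≥0∞} {v : ℝ → ℝ≥0∞}
    (hv : ∀ t ∈ Set.Ioc (0 : ℝ) 1, v t ≤ ENNReal.ofReal c ^ (1 - t) * M ^ t) :
    ∫⁻ t in Set.Ioc (0 : ℝ) 1, ENNReal.ofReal (xlogx (v t)) ≤
      ENNReal.ofReal (Real.log c + 1) * (M + ENNReal.ofReal c) := by
  have hlog := Real.log_nonneg hc
  have hc₀ : 0 < c := one_pos.trans_le hc
  rcases eq_or_ne M ⊤ with rfl | hM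
  · rw [top_add, ENNReal.mul_top (ENNReal.ofReal_pos.2 (by positivity)).ne']
    exact le_top
  lift M to ℝ≥0 using hM
  set l := Real.log ((M + c) / c)
  have hl : 0 ≤ l := Real.log_nonneg ((one_le_div hc₀).2 (by simp))
  have hexp : c * Real.exp l = M + c := by
    rw [Real.exp_log (by positivity), mul_div_cancel₀ _ hc₀.ne']
  have hMc : ENNReal.ofReal (M + c) = M + ENNReal.ofReal c := by
    rw [ENNReal.ofReal_add M.coe_nonneg hc₀.le, ENNReal.ofReal_coe_nnreal]
  have hv_exp (t : ℝ) (ht : t ∈ Set.Ioc (0 : ℝ) 1) : (v t).toReal ≤ c * Real.exp (t * l) := by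
    refine ENNReal.toReal_le_of_le_ofReal (by positivity) ((hv t ht).trans ?_)
    calc ENNReal.ofReal c ^ (1 - t) * (M : ℝ≥0∞) ^ t
      _ ≤ ENNReal.ofReal c ^ (1 - t) * ENNReal.ofReal (M + c) ^ t := by
        gcongr
        · exact ht.1.le
        · exact hMc ▸ le_self_add
      _ = ENNReal.ofReal (c * Real.exp (t * l)) := by
        rw [← hexp, ENNReal.ofReal_rpow_of_pos hc₀, ENNReal.ofReal_rpow_of_pos (by positivity),
          ← ENNReal.ofReal_mul (by positivity), Real.mul_rpow hc₀.le (by positivity),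
          ← mul_assoc, ← Real.rpow_add hc₀, sub_add_cancel, Real.rpow_one, ← Real.exp_mul,
          mul_comm l]
  calc ∫⁻ t in Set.Ioc (0 : ℝ) 1, ENNReal.ofReal (xlogx (v t))
    _ ≤ ∫⁻ t in Set.Ioc (0 : ℝ) 1,
        ENNReal.ofReal (Real.log c * (c * Real.exp l) + c * Real.exp (t * l) * l) :=
      setLIntegral_mono' measurableSet_Ioc fun t ht ↦ ENNReal.ofReal_le_ofReal
        (mul_log_le_of_le_mul_exp hc hl ht.2 ENNReal.toReal_nonneg (hv_exp t ht))
    _ ≤ ENNReal.ofReal (Real.log c * (c * Real.exp l) + c * Real.exp l) :=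
      setLIntegral_ofReal_add_mul_exp_le (by positivity) hc₀.le hl
    _ = ENNReal.ofReal (Real.log c + 1) * (M + ENNReal.ofReal c) := by
      rw [← add_one_mul, ENNReal.ofReal_mul (by positivity), hexp, hMc]

lemma LogConvexOn.setLIntegral_ofReal_xlogx_lineMap_le {α : Type} {P : Set (α → ℝ)}
    {u : (α → ℝ) → ℝ≥0∞} (hu : LogConvexOn P u) (hP : Convex ℝ P) {x b : α → ℝ} (hx : x ∈ P)
    (hb : b ∈ P) {c : ℝ} (hc : 1 ≤ c) (hux : u x ≤ ENNReal.ofReal c) :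
    ∫⁻ t in Set.Ioc (0 : ℝ) 1,
        ENNReal.ofReal (xlogx (P.indicator u (AffineMap.lineMap x b t))) ≤
      ENNReal.ofReal (Real.log c + 1) * (u b + ENNReal.ofReal c) := by
  refine setLIntegral_ofReal_xlogx_le hc fun t ht ↦ ?_
  rw [Set.indicator_of_mem (hP.lineMap_mem hx hb ⟨ht.1.le, ht.2⟩), AffineMap.lineMap_apply_module]
  refine (hu hx hb ht.1.le ht.2).trans ?_
  gcongr
  linarith [ht.2]

end EntropyAlongSegments

section System

namespace SystemOn

variable (S : SystemOn ι)

lemma isCompact : IsCompact S.P := S.simple.1.1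

lemma measurableSet : MeasurableSet S.P := S.isCompact.measurableSet

lemma nonempty_interior : (interior S.P).Nonempty := S.simple.1.2.1

lemma convex : Convex ℝ S.P := by
  obtain ⟨-, -, m, L, -, hP⟩ := S.simple.1
  rw [hP]
  exact convex_iInter fun k ↦ (convex_Ici 0).affine_preimage (L k)

lemma volume_ne_zero : volume S.P ≠ 0 :=
  (Measure.measure_pos_of_nonempty_interior _ S.nonempty_interior).ne'

lemma measure_facet_lt_top {F : Set (ι → ℝ)} (hF : IsFacetOf S.P F) : S.σ F < ⊤ := by
  obtain ⟨x, hx⟩ := S.nonempty_interior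
  obtain ⟨l, hl⟩ := hF.1.exists_linearMap_eq_one hx
  have hF_top : Measure.hausdorffMeasure ((Fintype.card ι : ℝ) - 1) F < ⊤ := by
    rcases eq_or_ne l 0 with rfl | hl₀
    · simp [hl]
    refine hausdorffMeasure_lt_top_of_subset_hyperplane hl₀ (c := 1 + l x)
      (hF.1.isCompact S.isCompact).isBounded fun y hy ↦ ?_
    rw [hl] at hy
    rw [← hy.2, map_sub, sub_add_cancel]
  obtain ⟨c, -, hc⟩ := S.flat_bdry F hF
  rw [← Measure.restrict_apply_self, hc, Measure.smul_apply, Measure.restrict_apply_self]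
  exact ENNReal.mul_lt_top ENNReal.ofReal_lt_top hF_top

instance : IsFiniteMeasure S.σ where
  measure_univ_lt_top := by
    obtain ⟨𝓕, hfin, hfacet, hsub⟩ := S.simple.1.frontier_subset_sUnion_facets
    rw [Set.sUnion_eq_biUnion] at hsub
    have hfrontier : S.σ (frontier S.P) < ⊤ := (measure_mono hsub).trans_lt
      (measure_biUnion_lt_top hfin fun F hF ↦ S.measure_facet_lt_top (hfacet F hF))
    rw [← Set.union_compl_self (frontier S.P)]
    exact (measure_union_le _ _).trans_lt (by simpa [S.bdry_supp] using hfrontier)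

lemma ae_mem_frontier : ∀ᵐ x ∂S.σ, x ∈ frontier S.P := S.bdry_supp

lemma exists_setLIntegral_convexJoin_facet_le {x₀ : ι → ℝ} (hx₀ : x₀ ∈ interior S.P)
    {F : Set (ι → ℝ)} (hF : IsFacetOf S.P F) :
    ∃ C : ℝ≥0∞, C ≠ ⊤ ∧ ∀ g : (ι → ℝ) → ℝ≥0∞, Measurable g →
      ∫⁻ x in convexJoin ℝ {x₀} F, g x ≤
        C * ∫⁻ b, (∫⁻ t in Set.Ioc (0 : ℝ) 1, g (AffineMap.lineMap x₀ b t)) ∂S.σ := by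
  obtain ⟨l, hl⟩ := hF.1.exists_linearMap_eq_one hx₀
  obtain ⟨C, hC, hle⟩ := exists_setLIntegral_convexJoin_le (l := l) (x₀ := x₀)
    (hF.1.isCompact S.isCompact) fun b hb ↦ by
      rw [hl] at hb
      exact hb.2
  obtain ⟨c, hc, hσ⟩ := S.flat_bdry F hF
  refine ⟨C * (ENNReal.ofReal c)⁻¹, by finiteness, fun g hg ↦ (hle g hg).trans ?_⟩
  rw [mul_assoc]
  gcongr
  rw [← ENNReal.div_eq_inv_mul,
    ENNReal.le_div_iff_mul_le (by simp [hc]) (by simp), mul_comm, ← smul_eq_mul,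
    ← lintegral_smul_measure, ← hσ]
  exact setLIntegral_le_lintegral _ _

lemma exists_setLIntegral_le {x₀ : ι → ℝ} (hx₀ : x₀ ∈ interior S.P) :
    ∃ C : ℝ≥0∞, C ≠ ⊤ ∧ ∀ g : (ι → ℝ) → ℝ≥0∞, Measurable g →
      ∫⁻ x in S.P, g x ≤ g x₀ * volume {x₀} +
        C * ∫⁻ b, (∫⁻ t in Set.Ioc (0 : ℝ) 1, g (AffineMap.lineMap x₀ b t)) ∂S.σ := by
  obtain ⟨𝓕, hfin, hfacet, hsub⟩ := S.simple.1.frontier_subset_sUnion_facets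
  have := hfin.fintype
  choose C hC hle using fun F : 𝓕 ↦ S.exists_setLIntegral_convexJoin_facet_le hx₀ (hfacet F F.2)
  refine ⟨∑ F, C F, ENNReal.sum_ne_top.2 fun F _ ↦ hC F, fun g hg ↦ ?_⟩
  have hcover : S.P ⊆ {x₀} ∪ ⋃ F : 𝓕, convexJoin ℝ {x₀} F := by
    rw [← convexJoin_iUnion_right, ← Set.sUnion_eq_iUnion]
    exact (subset_insert_convexJoin_frontier S.isCompact x₀).trans
      (Set.insert_subset_insert (convexJoin_mono_right hsub))
  calc ∫⁻ x in S.P, g x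
    _ ≤ (∫⁻ x in {x₀}, g x) + ∫⁻ x in ⋃ F : 𝓕, convexJoin ℝ {x₀} F, g x :=
      (lintegral_mono_set hcover).trans (lintegral_union_le g _ _)
    _ ≤ g x₀ * volume {x₀} + ∑ F : 𝓕, ∫⁻ x in convexJoin ℝ {x₀} F, g x := by
      rw [lintegral_singleton, ← tsum_fintype (L := .unconditional _)]
      gcongr
      exact lintegral_iUnion_le _ g
    _ ≤ _ := by
      rw [Finset.sum_mul]
      gcongr with F
      exact hle F g hg

end SystemOn

end System

section NormalizedMeasures

open InformationTheory

namespace SystemOn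

variable (S : SystemOn ι)

lemma measure_ne_zero : S.μ S.P ≠ 0 := by
  obtain ⟨c, hc, hμ⟩ := S.flat
  simp [hμ, hc, S.volume_ne_zero]

lemma measure_ne_top : S.μ S.P ≠ ⊤ := by
  obtain ⟨c, -, hμ⟩ := S.flat
  have := S.isCompact.measure_ne_top (μ := volume)
  simp only [hμ, Measure.smul_apply, Measure.restrict_apply_self, smul_eq_mul]
  finiteness

lemma restrict_measure : S.μ.restrict S.P = S.μ := by
  obtain ⟨c, -, hμ⟩ := S.flat
  rw [hμ, Measure.restrict_smul, Measure.restrict_restrict S.measurableSet, Set.inter_self]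

lemma measure_univ : S.μ Set.univ = S.μ S.P := by
  rw [← Measure.restrict_apply_univ S.P, restrict_measure]

instance : IsFiniteMeasure S.μ := ⟨S.measure_univ ▸ S.measure_ne_top.lt_top⟩

/-- The measure `μ` normalized to total mass one. -/
def ν : Measure (ι → ℝ) := (S.μ S.P)⁻¹ • S.μ

/-- The boundary measure in the normalization for which `U_𝒫(u) = ∫ u dτ`. -/
def τ : Measure (ι → ℝ) := (S.μ S.P)⁻¹ • S.σ

instance : IsProbabilityMeasure S.ν :=
  ⟨by simp [ν, S.measure_univ, ENNReal.inv_mul_cancel S.measure_ne_zero S.measure_ne_top]⟩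

instance : IsFiniteMeasure S.τ := S.σ.smul_finite (ENNReal.inv_ne_top.2 S.measure_ne_zero)

lemma smul_ν : S.μ S.P • S.ν = S.μ := by
  rw [ν, smul_smul, ENNReal.mul_inv_cancel S.measure_ne_zero S.measure_ne_top, one_smul]

lemma ae_ν_mem : ∀ᵐ x ∂S.ν, x ∈ S.P := by
  refine Measure.ae_smul_measure ?_ _
  rw [← S.restrict_measure]
  exact ae_restrict_mem S.measurableSet

lemma ae_τ_mem : ∀ᵐ x ∂S.τ, x ∈ S.P :=
  Measure.ae_smul_measure (S.ae_mem_frontier.mono fun _ hx ↦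
    S.isCompact.isClosed.frontier_subset hx) _

lemma volume_restrict_absolutelyContinuous_ν : volume.restrict S.P ≪ S.ν := by
  obtain ⟨c, hc, hμ⟩ := S.flat
  have : volume.restrict S.P ≪ S.μ := by
    rw [hμ]
    exact Measure.absolutelyContinuous_smul (by simpa using hc)
  exact this.trans (Measure.absolutelyContinuous_smul (ENNReal.inv_ne_zero.2 S.measure_ne_top))

lemma setLIntegral_measure (f : (ι → ℝ) → ℝ≥0∞) :
    ∫⁻ x in S.P, f x ∂S.μ = S.μ S.P * ∫⁻ x, f x ∂S.ν := by
  rw [S.restrict_measure, ← smul_eq_mul, ← lintegral_smul_measure, S.smul_ν]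

variable {S} {u : (ι → ℝ) → ℝ≥0∞}

lemma mem_mExp_one_iff : u ∈ MExp S 1 ↔ IsLogConvexLSC S.P u ∧ ∫⁻ x, u x ∂S.ν = 1 := by
  have hnorm : ∫⁻ x in S.P, u x ∂S.μ = S.μ S.P ↔ ∫⁻ x, u x ∂S.ν = 1 := by
    rw [S.setLIntegral_measure]
    nth_rw 2 [← mul_one (S.μ S.P)]
    exact ENNReal.mul_right_inj S.measure_ne_zero S.measure_ne_top
  constructor
  · rintro ⟨hlsc, hpos, hconv, hint, -⟩
    exact ⟨⟨hlsc, hpos, hconv⟩, hnorm.1 hint⟩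
  · rintro ⟨⟨hlsc, hpos, hconv⟩, hint⟩
    refine ⟨hlsc, hpos, hconv, hnorm.2 hint, ?_⟩
    simp_rw [ENNReal.rpow_one, hnorm.2 hint]
    exact S.measure_ne_top.lt_top

lemma upf_eq_lintegral (u : (ι → ℝ) → ℝ≥0∞) : Upf S u = ∫⁻ x, u x ∂S.τ := by
  rw [Upf, τ, lintegral_smul_measure, Measure.restrict_eq_self_of_ae_mem S.ae_mem_frontier,
    smul_eq_mul]

lemma aemeasurable_ν (hu : u ∈ MExp S 1) : AEMeasurable u S.ν :=
  (mem_mExp_one_iff.1 hu).1.aemeasurable S.measurableSet S.ae_ν_mem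

lemma aemeasurable_τ (hu : u ∈ MExp S 1) : AEMeasurable u S.τ :=
  (mem_mExp_one_iff.1 hu).1.aemeasurable S.measurableSet S.ae_τ_mem

lemma isProbabilityMeasure_withDensity (hu : u ∈ MExp S 1) :
    IsProbabilityMeasure (S.ν.withDensity u) :=
  ⟨by simpa using (mem_mExp_one_iff.1 hu).2⟩

variable (S) in
/-- The relative entropy of the distribution with density `u` with respect to the equidistribution
on `P`; on `ℳ^{exp,1}(P)` it is the negative of the entropy `S_𝒫`. -/
def relEntropy (u : (ι → ℝ) → ℝ≥0∞) : ℝ≥0∞ := klDiv (S.ν.withDensity u) S.ν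

lemma relEntropy_add_lintegral (hu : u ∈ MExp S 1) :
    S.relEntropy u + ∫⁻ x, ENNReal.ofReal (-xlogx (u x)) ∂S.ν =
      ∫⁻ x, ENNReal.ofReal (xlogx (u x)) ∂S.ν :=
  klDiv_withDensity_add_lintegral_neg_xlogx (aemeasurable_ν hu) (mem_mExp_one_iff.1 hu).2

lemma spf_eq_neg_relEntropy (hu : u ∈ MExp S 1) : Spf S u = -(S.relEntropy u : EReal) := by
  rw [Spf, S.setLIntegral_measure, S.setLIntegral_measure, ← relEntropy_add_lintegral hu]
  have hm₀ := S.measure_ne_zero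
  have hm := S.measure_ne_top
  have hA := lintegral_neg_xlogx_ne_top S.ν u
  generalize S.μ S.P = m at *
  generalize ∫⁻ x, ENNReal.ofReal (-xlogx (u x)) ∂S.ν = A at *
  generalize S.relEntropy u = D
  lift m to ℝ≥0 using hm
  lift A to ℝ≥0 using hA
  have hm_pos : (0 : ℝ) < m := by
    exact_mod_cast pos_iff_ne_zero.2 (ENNReal.coe_ne_zero.1 hm₀)
  induction D with
  | top =>
    rw [top_add, ENNReal.mul_top hm₀, EReal.coe_ennreal_top, EReal.neg_top,
      ← ENNReal.coe_mul, EReal.coe_nnreal_eq_coe_real, EReal.sub_top,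
      EReal.coe_mul_bot_of_pos (by simpa using hm_pos)]
  | coe D =>
    simp only [ENNReal.coe_toReal, ← ENNReal.coe_add, ← ENNReal.coe_mul,
      EReal.coe_nnreal_eq_coe_real, ← EReal.coe_sub, ← EReal.coe_mul, ← EReal.coe_neg]
    congr 1
    push_cast
    field_simp
    ring

lemma one_mem_mExp : (fun _ ↦ 1) ∈ MExp S 1 :=
  mem_mExp_one_iff.2
    ⟨⟨lowerSemicontinuousOn_const, by simp, fun _ _ _ _ _ _ _ ↦ by simp⟩, by simp⟩

lemma relEntropy_one : S.relEntropy (fun _ ↦ 1) = 0 := by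
  rw [relEntropy, withDensity_const, one_smul, klDiv_self]

lemma upf_one_ne_top : Upf S (fun _ ↦ 1) ≠ ⊤ := by
  simp [upf_eq_lintegral]

lemma exists_mem_interior_ne_top (hu : u ∈ MExp S 1) : ∃ x ∈ interior S.P, u x ≠ ⊤ := by
  have hfin : ∀ᵐ x ∂volume.restrict S.P, u x < ⊤ :=
    S.volume_restrict_absolutelyContinuous_ν.ae_le
      (ae_lt_top' (aemeasurable_ν hu) (by simp [(mem_mExp_one_iff.1 hu).2]))
  have hint := Measure.restrict_mono interior_subset le_rfl |>.absolutelyContinuous.ae_le hfin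
  have : NeZero (volume.restrict (interior S.P)) :=
    ⟨by simpa using (isOpen_interior.measure_pos volume S.nonempty_interior).ne'⟩
  obtain ⟨x, hx, hux⟩ := ((ae_restrict_mem isOpen_interior.measurableSet).and hint).exists
  exact ⟨x, hx, hux.ne⟩

variable (S) in
lemma exists_ν_eq_smul : ∃ a : ℝ≥0∞, a ≠ ⊤ ∧ S.ν = a • volume.restrict S.P := by
  obtain ⟨c, -, hμ⟩ := S.flat
  have := ENNReal.inv_ne_top.2 S.measure_ne_zero
  exact ⟨(S.μ S.P)⁻¹ * ENNReal.ofReal c, by finiteness, by rw [ν, hμ, smul_smul, ← hμ]⟩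

/- Along each segment from a fixed interior point to a boundary point `b`, log-convexity bounds the
integral of `u log u` by an affine function of `u b`. -/
lemma relEntropy_ne_top (hu : u ∈ MExp S 1) (hU : Upf S u ≠ ⊤) : S.relEntropy u ≠ ⊤ := by
  obtain ⟨hu', -⟩ := mem_mExp_one_iff.1 hu
  obtain ⟨x₀, hx₀, hux₀⟩ := exists_mem_interior_ne_top hu
  obtain ⟨C, hC, hle⟩ := S.exists_setLIntegral_le hx₀
  obtain ⟨a, ha, hν⟩ := S.exists_ν_eq_smul
  have hxlogx : Measurable fun x ↦ ENNReal.ofReal (xlogx (S.P.indicator u x)) := by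
    have := (hu'.measurable_indicator S.measurableSet).ennreal_toReal
    exact (this.mul this.log).ennreal_ofReal
  set c := max 1 (u x₀).toReal
  have hux₀c : u x₀ ≤ ENNReal.ofReal c :=
    (ENNReal.le_ofReal_iff_toReal_le hux₀ (by positivity)).2 (le_max_right _ _)
  have hsegment : ∀ᵐ b ∂S.σ, ∫⁻ t in Set.Ioc (0 : ℝ) 1,
      ENNReal.ofReal (xlogx (S.P.indicator u (AffineMap.lineMap x₀ b t))) ≤
        ENNReal.ofReal (Real.log c + 1) * (u b + ENNReal.ofReal c) :=
    S.ae_mem_frontier.mono fun b hb ↦ hu'.logConvex.setLIntegral_ofReal_xlogx_lineMap_le S.convex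
      (interior_subset hx₀) (S.isCompact.isClosed.frontier_subset hb) (le_max_left _ _) hux₀c
  have hσ : ∫⁻ b, u b ∂S.σ ≠ ⊤ := by
    rw [Upf, Measure.restrict_eq_self_of_ae_mem S.ae_mem_frontier] at hU
    exact fun h ↦ hU (by simp [h, S.measure_ne_top])
  have hboundary := lintegral_mono_ae hsegment
  rw [lintegral_const_mul' _ _ ENNReal.ofReal_ne_top, lintegral_add_right _ measurable_const,
    lintegral_const] at hboundary
  have hindicator : (fun x ↦ ENNReal.ofReal (xlogx (u x))) =ᵐ[S.ν]
      fun x ↦ ENNReal.ofReal (xlogx (S.P.indicator u x)) :=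
    S.ae_ν_mem.mono fun x hx ↦ by simp only [Set.indicator_of_mem hx]
  refine ne_top_of_le_ne_top ?_ (le_self_add.trans_eq (relEntropy_add_lintegral hu))
  rw [lintegral_congr_ae hindicator, hν, lintegral_smul_measure]
  refine ENNReal.mul_ne_top ha (ne_top_of_le_ne_top ?_ ((hle _ hxlogx).trans
    (add_le_add_right (mul_le_mul_right hboundary C) _)))
  have : volume {x₀} ≠ ⊤ := isCompact_singleton.measure_ne_top
  finiteness

end SystemOn

end NormalizedMeasures

section CanonicalDistribution

namespace SystemOn

variable {S : SystemOn ι} {T : ℝ} {u w : (ι → ℝ) → ℝ≥0∞}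

variable (S T) in
/-- The free energy `F_𝒫(T, u)` for `T ≥ 0`, written with the relative entropy in place of the
entropy so that all terms are nonnegative. -/
def freeEnergy (u : (ι → ℝ) → ℝ≥0∞) : ℝ≥0∞ := Upf S u + ENNReal.ofReal T * S.relEntropy u

lemma fpf_eq_freeEnergy (hT : 0 < T) (hu : u ∈ MExp S 1) : Fpf S T u = S.freeEnergy T u := by
  rw [Fpf, spf_eq_neg_relEntropy hu, freeEnergy]
  split_ifs with hbot
  · rw [EReal.neg_eq_bot_iff, EReal.coe_ennreal_eq_top_iff] at hbot
    rw [hbot, ENNReal.mul_top (by simpa using hT), add_top, EReal.coe_ennreal_top]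
  · rw [EReal.coe_ennreal_add, EReal.coe_ennreal_mul, EReal.coe_ennreal_ofReal,
      max_eq_left hT.le, mul_neg, sub_eq_add_neg, neg_neg]

lemma upf_le_freeEnergy : Upf S u ≤ S.freeEnergy T u := le_self_add

lemma freeEnergy_zero : S.freeEnergy 0 u = Upf S u := by simp [freeEnergy]

lemma freeEnergy_one_ne_top : S.freeEnergy T (fun _ ↦ 1) ≠ ⊤ := by
  simpa [freeEnergy, relEntropy_one] using upf_one_ne_top

lemma relEntropy_congr (h : Set.EqOn u w S.P) : S.relEntropy u = S.relEntropy w := by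
  rw [relEntropy, withDensity_congr_ae (S.ae_ν_mem.mono h), ← relEntropy]

lemma midpoint_mem_mExp (hu : u ∈ MExp S 1) (hw : w ∈ MExp S 1) :
    (fun x ↦ 2⁻¹ * (u x + w x)) ∈ MExp S 1 := by
  obtain ⟨hu', hu_one⟩ := mem_mExp_one_iff.1 hu
  obtain ⟨hw', hw_one⟩ := mem_mExp_one_iff.1 hw
  refine mem_mExp_one_iff.2 ⟨hu'.midpoint hw', ?_⟩
  rw [lintegral_const_mul' _ _ (by simp), lintegral_add_left' (aemeasurable_ν hu), hu_one, hw_one,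
    one_add_one_eq_two, ENNReal.inv_mul_cancel two_ne_zero ENNReal.ofNat_ne_top]

lemma two_mul_upf_midpoint (hu : u ∈ MExp S 1) :
    2 * Upf S (fun x ↦ 2⁻¹ * (u x + w x)) = Upf S u + Upf S w := by
  simp only [upf_eq_lintegral]
  rw [lintegral_const_mul' _ _ (by simp), lintegral_add_left' (aemeasurable_τ hu),
    ENNReal.mul_inv_cancel_left two_ne_zero ENNReal.ofNat_ne_top]

lemma eqOn_of_relEntropy_add_le_two_mul_midpoint (hu : u ∈ MExp S 1) (hw : w ∈ MExp S 1)
    (hHu : S.relEntropy u ≠ ⊤) (hHw : S.relEntropy w ≠ ⊤)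
    (h : S.relEntropy u + S.relEntropy w ≤ 2 * S.relEntropy fun x ↦ 2⁻¹ * (u x + w x)) :
    Set.EqOn u w S.P := by
  obtain ⟨hu', hu_one⟩ := mem_mExp_one_iff.1 hu
  obtain ⟨hw', hw_one⟩ := mem_mExp_one_iff.1 hw
  have heq : u =ᵐ[S.ν] w := ae_eq_of_klDiv_add_le_two_mul_midpoint (aemeasurable_ν hu)
    (aemeasurable_ν hw) (by simp [hu_one]) (by simp [hw_one]) hHu hHw h
  have hfin : ∀ᵐ x ∂S.ν, u x ≠ ⊤ :=
    (ae_lt_top' (aemeasurable_ν hu) (by simp [hu_one])).mono fun _ ↦ LT.lt.ne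
  have hac := S.volume_restrict_absolutelyContinuous_ν.ae_le
  exact hu'.eqOn_of_ae_eq S.convex S.measurableSet S.volume_ne_zero hw' (hac hfin) (hac heq)

lemma eqOn_of_freeEnergy_le (hT : 0 < T) (hu : u ∈ MExp S 1) (hw : w ∈ MExp S 1)
    (hmin : ∀ v ∈ MExp S 1, S.freeEnergy T u ≤ S.freeEnergy T v)
    (hle : S.freeEnergy T w ≤ S.freeEnergy T u) : Set.EqOn u w S.P := by
  have hFu : S.freeEnergy T u ≠ ⊤ := ne_top_of_le_ne_top freeEnergy_one_ne_top (hmin _ one_mem_mExp)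
  have hUu := ne_top_of_le_ne_top hFu upf_le_freeEnergy
  have hUw := ne_top_of_le_ne_top hFu (upf_le_freeEnergy.trans hle)
  refine eqOn_of_relEntropy_add_le_two_mul_midpoint hu hw (relEntropy_ne_top hu hUu)
    (relEntropy_ne_top hw hUw) ?_
  set m : (ι → ℝ) → ℝ≥0∞ := fun x ↦ 2⁻¹ * (u x + w x)
  have hm := hmin m (midpoint_mem_mExp hu hw)
  have hsum : (Upf S u + Upf S w) + ENNReal.ofReal T * (S.relEntropy u + S.relEntropy w) ≤
      (Upf S u + Upf S w) + ENNReal.ofReal T * (2 * S.relEntropy m) :=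
    calc (Upf S u + Upf S w) + ENNReal.ofReal T * (S.relEntropy u + S.relEntropy w)
      _ = S.freeEnergy T u + S.freeEnergy T w := by simp only [freeEnergy]; ring
      _ ≤ S.freeEnergy T m + S.freeEnergy T m := add_le_add hm (hle.trans hm)
      _ = 2 * Upf S m + ENNReal.ofReal T * (2 * S.relEntropy m) := by simp only [freeEnergy]; ring
      _ = _ := by rw [two_mul_upf_midpoint hu]
  exact (ENNReal.mul_le_mul_iff_right (by simpa using hT) ENNReal.ofReal_ne_top).1
    ((ENNReal.add_le_add_iff_left (by finiteness)).1 hsum)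

/- The tie-break by entropy, imposed at `T = 0` only, holds at positive temperature because the
minimizer of the free energy is unique. -/
lemma isCanonical_iff (hT : 0 ≤ T) :
    IsCanonical S T u ↔ u ∈ MExp S 1 ∧ (∀ w ∈ MExp S 1, S.freeEnergy T u ≤ S.freeEnergy T w) ∧
      ∀ w ∈ MExp S 1, S.freeEnergy T w ≤ S.freeEnergy T u → S.relEntropy u ≤ S.relEntropy w := by
  refine and_congr_right fun hu ↦ ?_
  rcases hT.eq_or_lt with rfl | hT
  · simp only [lt_irrefl, false_imp_iff, true_and, true_imp_iff, freeEnergy_zero]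
    refine and_congr_right fun hmin ↦ forall₂_congr fun w hw ↦ ?_
    rw [spf_eq_neg_relEntropy hu, spf_eq_neg_relEntropy hw, EReal.neg_le_neg_iff,
      EReal.coe_ennreal_le_coe_ennreal_iff]
    exact imp_congr_left ⟨fun h ↦ h u hu, fun h v hv ↦ h.trans (hmin v hv)⟩
  · simp only [hT, hT.ne', true_imp_iff, false_imp_iff, and_true]
    have hF : (∀ w ∈ MExp S 1, Fpf S T u ≤ Fpf S T w) ↔
        ∀ w ∈ MExp S 1, S.freeEnergy T u ≤ S.freeEnergy T w :=
      forall₂_congr fun w hw ↦ by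
        rw [fpf_eq_freeEnergy hT hu, fpf_eq_freeEnergy hT hw, EReal.coe_ennreal_le_coe_ennreal_iff]
    rw [hF, iff_self_and]
    exact fun hmin w hw hle ↦ (relEntropy_congr (eqOn_of_freeEnergy_le hT hu hw hmin hle)).le

end SystemOn

open SystemOn

variable {S : SystemOn ι} {T : ℝ} {u w : (ι → ℝ) → ℝ≥0∞}

lemma IsCanonical.eqOn (hT : 0 ≤ T) (hu : IsCanonical S T u) (hw : IsCanonical S T w) :
    Set.EqOn u w S.P := by
  obtain ⟨hu_mem, hu_min, hu_tie⟩ := (isCanonical_iff hT).1 hu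
  obtain ⟨hw_mem, hw_min, hw_tie⟩ := (isCanonical_iff hT).1 hw
  rcases hT.eq_or_lt with rfl | hT
  · simp only [freeEnergy_zero] at hu_min hw_min hu_tie hw_tie
    have hUu : Upf S u ≠ ⊤ := ne_top_of_le_ne_top upf_one_ne_top (hu_min _ one_mem_mExp)
    have hUw : Upf S w ≠ ⊤ := ne_top_of_le_ne_top upf_one_ne_top (hw_min _ one_mem_mExp)
    have hUuw := (hu_min w hw_mem).antisymm (hw_min u hu_mem)
    have hm_mem := midpoint_mem_mExp hu_mem hw_mem
    have hUm : Upf S (fun x ↦ 2⁻¹ * (u x + w x)) = Upf S u := by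
      rw [← ENNReal.mul_right_inj two_ne_zero ENNReal.ofNat_ne_top, two_mul_upf_midpoint hu_mem,
        ← hUuw, two_mul]
    refine eqOn_of_relEntropy_add_le_two_mul_midpoint hu_mem hw_mem
      (relEntropy_ne_top hu_mem hUu) (relEntropy_ne_top hw_mem hUw) ?_
    rw [two_mul]
    exact add_le_add (hu_tie _ hm_mem hUm.le) (hw_tie _ hm_mem (hUm.trans hUuw).le)
  · exact eqOn_of_freeEnergy_le hT hu_mem hw_mem hu_min (hw_min u hu_mem)

end CanonicalDistribution

section CompositeSystem

open InformationTheory SystemOn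

variable {ι₁ ι₂ : Type}

lemma joinMap_eq_sumPiEquivProdPi_symm :
    joinMap ι₁ ι₂ = (MeasurableEquiv.sumPiEquivProdPi fun _ : ι₁ ⊕ ι₂ ↦ ℝ).symm := rfl

/-- The density `u₁ × u₂ : (x, y) ↦ u₁ x * u₂ y` on the composite system. -/
def prodDensity (u₁ : (ι₁ → ℝ) → ℝ≥0∞) (u₂ : (ι₂ → ℝ) → ℝ≥0∞) (x : ι₁ ⊕ ι₂ → ℝ) : ℝ≥0∞ :=
  u₁ (fun i ↦ x (Sum.inl i)) * u₂ (fun i ↦ x (Sum.inr i))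

variable {u₁ : (ι₁ → ℝ) → ℝ≥0∞} {u₂ : (ι₂ → ℝ) → ℝ≥0∞}

/-- The first marginal of the density `u`, with `y` averaged over the second system. -/
def fstMarginal [Fintype ι₂] (S₂ : SystemOn ι₂) (u : (ι₁ ⊕ ι₂ → ℝ) → ℝ≥0∞) (x : ι₁ → ℝ) : ℝ≥0∞ :=
  ∫⁻ y, u (joinMap ι₁ ι₂ (x, y)) ∂S₂.ν

/-- The second marginal of the density `u`, with `x` averaged over the first system. -/
def sndMarginal [Fintype ι₁] (S₁ : SystemOn ι₁) (u : (ι₁ ⊕ ι₂ → ℝ) → ℝ≥0∞) (y : ι₂ → ℝ) : ℝ≥0∞ :=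
  ∫⁻ x, u (joinMap ι₁ ι₂ (x, y)) ∂S₁.ν

lemma fstMarginal_prodDensity [Fintype ι₂] {S₂ : SystemOn ι₂} (u₁ : (ι₁ → ℝ) → ℝ≥0∞)
    (hu₂ : u₂ ∈ MExp S₂ 1) : fstMarginal S₂ (prodDensity u₁ u₂) = u₁ := by
  ext x
  refine (lintegral_const_mul'' (u₁ x) (aemeasurable_ν hu₂)).trans ?_
  rw [(mem_mExp_one_iff.1 hu₂).2, mul_one]

lemma sndMarginal_prodDensity [Fintype ι₁] {S₁ : SystemOn ι₁} (hu₁ : u₁ ∈ MExp S₁ 1)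
    (u₂ : (ι₂ → ℝ) → ℝ≥0∞) : sndMarginal S₁ (prodDensity u₁ u₂) = u₂ := by
  ext y
  refine (lintegral_mul_const'' (u₂ y) (aemeasurable_ν hu₁)).trans ?_
  rw [(mem_mExp_one_iff.1 hu₁).2, one_mul]

variable [Fintype ι₁] [Fintype ι₂] {S₁ : SystemOn ι₁} {S₂ : SystemOn ι₂} {S : SystemOn (ι₁ ⊕ ι₂)}
  {u : (ι₁ ⊕ ι₂ → ℝ) → ℝ≥0∞} {T : ℝ}

/-- `S` is the composite system `S₁ × S₂`, carried over to `ℝ^(ι₁ ⊕ ι₂)` by `joinMap`. -/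
structure IsComposite (S₁ : SystemOn ι₁) (S₂ : SystemOn ι₂) (S : SystemOn (ι₁ ⊕ ι₂)) : Prop where
  polytope_eq :
    S.P = {x | (fun i ↦ x (Sum.inl i)) ∈ S₁.P ∧ (fun i ↦ x (Sum.inr i)) ∈ S₂.P}
  measure_eq : S.μ = (S₁.μ.prod S₂.μ).map (joinMap ι₁ ι₂)
  boundary_eq : S.σ = (S₁.σ.prod S₂.μ).map (joinMap ι₁ ι₂) +
    (S₁.μ.prod S₂.σ).map (joinMap ι₁ ι₂)

namespace IsComposite

variable (h : IsComposite S₁ S₂ S)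

include h

lemma joinMap_mem_iff {x : ι₁ → ℝ} {y : ι₂ → ℝ} :
    joinMap ι₁ ι₂ (x, y) ∈ S.P ↔ x ∈ S₁.P ∧ y ∈ S₂.P := by
  rw [h.polytope_eq]
  rfl

lemma measure_polytope : S.μ S.P = S₁.μ S₁.P * S₂.μ S₂.P := by
  rw [← S.measure_univ, ← S₁.measure_univ, ← S₂.measure_univ, h.measure_eq,
    joinMap_eq_sumPiEquivProdPi_symm, MeasurableEquiv.map_apply, Set.preimage_univ,
    ← Set.univ_prod_univ, Measure.prod_prod]

lemma inv_measure_polytope : (S.μ S.P)⁻¹ = (S₁.μ S₁.P)⁻¹ * (S₂.μ S₂.P)⁻¹ := by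
  rw [h.measure_polytope, ENNReal.mul_inv (.inl S₁.measure_ne_zero) (.inl S₁.measure_ne_top)]

lemma ν_eq : S.ν = (S₁.ν.prod S₂.ν).map (joinMap ι₁ ι₂) := by
  rw [ν, ν, ν, h.inv_measure_polytope, h.measure_eq, Measure.prod_smul_left,
    Measure.prod_smul_right, smul_smul, Measure.map_smul]

lemma τ_eq : S.τ = (S₁.τ.prod S₂.ν).map (joinMap ι₁ ι₂) +
    (S₁.ν.prod S₂.τ).map (joinMap ι₁ ι₂) := by
  simp only [ν, τ, h.inv_measure_polytope, h.boundary_eq, Measure.prod_smul_left,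
    Measure.prod_smul_right, smul_smul, Measure.map_smul, smul_add, mul_comm]

lemma aemeasurable_comp_joinMap (hu : IsLogConvexLSC S.P u) {ρ₁ : Measure (ι₁ → ℝ)}
    {ρ₂ : Measure (ι₂ → ℝ)} [SFinite ρ₁] [SFinite ρ₂] (hρ₁ : ∀ᵐ x ∂ρ₁, x ∈ S₁.P)
    (hρ₂ : ∀ᵐ y ∂ρ₂, y ∈ S₂.P) : AEMeasurable (fun p ↦ u (joinMap ι₁ ι₂ p)) (ρ₁.prod ρ₂) := by
  have hmem : ∀ᵐ p ∂ρ₁.prod ρ₂, joinMap ι₁ ι₂ p ∈ S.P :=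
    ((Measure.quasiMeasurePreserving_fst.ae hρ₁).and
      (Measure.quasiMeasurePreserving_snd.ae hρ₂)).mono fun _ ↦ h.joinMap_mem_iff.2
  have hjoin : Measurable (joinMap ι₁ ι₂) :=
    joinMap_eq_sumPiEquivProdPi_symm ▸ MeasurableEquiv.measurable _
  refine ((hu.measurable_indicator S.measurableSet).comp hjoin).aemeasurable.congr ?_
  exact hmem.mono fun p hp ↦ Set.indicator_of_mem hp u

lemma isLogConvexLSC_slice_fst (hu : IsLogConvexLSC S.P u) {y : ι₂ → ℝ} (hy : y ∈ S₂.P) :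
    IsLogConvexLSC S₁.P fun x ↦ u (joinMap ι₁ ι₂ (x, y)) :=
  let join := (LinearEquiv.sumArrowLequivProdArrow ι₁ ι₂ ℝ ℝ).symm.toAffineEquiv.toAffineMap
  hu.comp_affineMap (join.comp <| (AffineMap.id ℝ _).prod (AffineMap.const ℝ _ y)) fun _ hx ↦
    h.joinMap_mem_iff.2 ⟨hx, hy⟩

lemma isLogConvexLSC_slice_snd (hu : IsLogConvexLSC S.P u) {x : ι₁ → ℝ} (hx : x ∈ S₁.P) :
    IsLogConvexLSC S₂.P fun y ↦ u (joinMap ι₁ ι₂ (x, y)) :=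
  let join := (LinearEquiv.sumArrowLequivProdArrow ι₁ ι₂ ℝ ℝ).symm.toAffineEquiv.toAffineMap
  hu.comp_affineMap (join.comp <| (AffineMap.const ℝ _ x).prod (AffineMap.id ℝ _)) fun _ hy ↦
    h.joinMap_mem_iff.2 ⟨hx, hy⟩

lemma isLogConvexLSC_prodDensity (hu₁ : IsLogConvexLSC S₁.P u₁) (hu₂ : IsLogConvexLSC S₂.P u₂) :
    IsLogConvexLSC S.P (prodDensity u₁ u₂) := by
  have hS := h.polytope_eq
  exact (hu₁.comp_affineMap (LinearMap.funLeft ℝ ℝ Sum.inl).toAffineMap fun x hx ↦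
      (hS ▸ hx :).1).mul
    (hu₂.comp_affineMap (LinearMap.funLeft ℝ ℝ Sum.inr).toAffineMap fun x hx ↦ (hS ▸ hx :).2)

lemma lintegral_ν : ∫⁻ x, u x ∂S.ν = ∫⁻ p, u (joinMap ι₁ ι₂ p) ∂S₁.ν.prod S₂.ν := by
  rw [h.ν_eq, joinMap_eq_sumPiEquivProdPi_symm, lintegral_map_equiv]

lemma fstMarginal_mem_mExp (hu : u ∈ MExp S 1) : fstMarginal S₂ u ∈ MExp S₁ 1 := by
  obtain ⟨hu', hu_one⟩ := mem_mExp_one_iff.1 hu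
  refine mem_mExp_one_iff.2 ⟨.lintegral (S₂.ae_ν_mem.mono fun y ↦ h.isLogConvexLSC_slice_fst hu')
    fun x hx ↦ (h.isLogConvexLSC_slice_snd hu' hx).aemeasurable S₂.measurableSet S₂.ae_ν_mem, ?_⟩
  rwa [h.lintegral_ν, lintegral_prod _ (h.aemeasurable_comp_joinMap hu' S₁.ae_ν_mem S₂.ae_ν_mem)]
    at hu_one

lemma sndMarginal_mem_mExp (hu : u ∈ MExp S 1) : sndMarginal S₁ u ∈ MExp S₂ 1 := by
  obtain ⟨hu', hu_one⟩ := mem_mExp_one_iff.1 hu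
  refine mem_mExp_one_iff.2 ⟨.lintegral (S₁.ae_ν_mem.mono fun x ↦ h.isLogConvexLSC_slice_snd hu')
    fun y hy ↦ (h.isLogConvexLSC_slice_fst hu' hy).aemeasurable S₁.measurableSet S₁.ae_ν_mem, ?_⟩
  rwa [h.lintegral_ν,
    lintegral_prod_symm _ (h.aemeasurable_comp_joinMap hu' S₁.ae_ν_mem S₂.ae_ν_mem)] at hu_one

lemma prodDensity_mem_mExp (hu₁ : u₁ ∈ MExp S₁ 1) (hu₂ : u₂ ∈ MExp S₂ 1) :
    prodDensity u₁ u₂ ∈ MExp S 1 := by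
  obtain ⟨hu₁', hu₁_one⟩ := mem_mExp_one_iff.1 hu₁
  obtain ⟨hu₂', hu₂_one⟩ := mem_mExp_one_iff.1 hu₂
  refine mem_mExp_one_iff.2 ⟨h.isLogConvexLSC_prodDensity hu₁' hu₂', ?_⟩
  rw [h.lintegral_ν]
  exact (lintegral_prod_mul (aemeasurable_ν hu₁) (aemeasurable_ν hu₂)).trans
    (by rw [hu₁_one, hu₂_one, one_mul])

lemma upf_eq_add (hu : u ∈ MExp S 1) :
    Upf S u = Upf S₁ (fstMarginal S₂ u) + Upf S₂ (sndMarginal S₁ u) := by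
  obtain ⟨hu', -⟩ := mem_mExp_one_iff.1 hu
  simp only [upf_eq_lintegral]
  rw [h.τ_eq, lintegral_add_measure, joinMap_eq_sumPiEquivProdPi_symm, lintegral_map_equiv,
    lintegral_map_equiv, ← joinMap_eq_sumPiEquivProdPi_symm,
    lintegral_prod _ (h.aemeasurable_comp_joinMap hu' S₁.ae_τ_mem S₂.ae_ν_mem),
    lintegral_prod_symm _ (h.aemeasurable_comp_joinMap hu' S₁.ae_ν_mem S₂.ae_τ_mem)]
  rfl

lemma withDensity_ν_eq : S.ν.withDensity u =
    ((S₁.ν.prod S₂.ν).withDensity fun p ↦ u (joinMap ι₁ ι₂ p)).map (joinMap ι₁ ι₂) := by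
  rw [h.ν_eq, joinMap_eq_sumPiEquivProdPi_symm, withDensity_map_measurableEquiv]
  rfl

lemma isProbabilityMeasure_withDensity_comp_joinMap (hu : u ∈ MExp S 1) :
    IsProbabilityMeasure ((S₁.ν.prod S₂.ν).withDensity fun p ↦ u (joinMap ι₁ ι₂ p)) :=
  ⟨by simpa [h.lintegral_ν] using (mem_mExp_one_iff.1 hu).2⟩

lemma relEntropy_eq_klDiv (hu : u ∈ MExp S 1) : S.relEntropy u = klDiv
    ((S₁.ν.prod S₂.ν).withDensity fun p ↦ u (joinMap ι₁ ι₂ p)) (S₁.ν.prod S₂.ν) := by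
  have := h.isProbabilityMeasure_withDensity_comp_joinMap hu
  rw [relEntropy, h.withDensity_ν_eq, h.ν_eq]
  exact klDiv_map_measurableEquiv (MeasurableEquiv.sumPiEquivProdPi fun _ : ι₁ ⊕ ι₂ ↦ ℝ).symm _ _

lemma relEntropy_prodDensity (hu₁ : u₁ ∈ MExp S₁ 1) (hu₂ : u₂ ∈ MExp S₂ 1) :
    S.relEntropy (prodDensity u₁ u₂) = S₁.relEntropy u₁ + S₂.relEntropy u₂ := by
  have := isProbabilityMeasure_withDensity hu₁
  have := isProbabilityMeasure_withDensity hu₂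
  rw [h.relEntropy_eq_klDiv (h.prodDensity_mem_mExp hu₁ hu₂), relEntropy, relEntropy, ← klDiv_prod,
    prod_withDensity₀ (aemeasurable_ν hu₁) (aemeasurable_ν hu₂)]
  rfl

lemma relEntropy_marginals_le (hu : u ∈ MExp S 1) :
    S₁.relEntropy (fstMarginal S₂ u) + S₂.relEntropy (sndMarginal S₁ u) ≤ S.relEntropy u := by
  have hmeas := h.aemeasurable_comp_joinMap (mem_mExp_one_iff.1 hu).1 S₁.ae_ν_mem S₂.ae_ν_mem
  have := h.isProbabilityMeasure_withDensity_comp_joinMap hu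
  rw [h.relEntropy_eq_klDiv hu]
  have hle := klDiv_fst_add_klDiv_snd_le
    ((S₁.ν.prod S₂.ν).withDensity fun p ↦ u (joinMap ι₁ ι₂ p)) S₁.ν S₂.ν
  rwa [fst_withDensity_prod hmeas, snd_withDensity_prod hmeas] at hle

lemma freeEnergy_prodDensity (hu₁ : u₁ ∈ MExp S₁ 1) (hu₂ : u₂ ∈ MExp S₂ 1) :
    S.freeEnergy T (prodDensity u₁ u₂) = S₁.freeEnergy T u₁ + S₂.freeEnergy T u₂ := by
  simp only [freeEnergy, h.upf_eq_add (h.prodDensity_mem_mExp hu₁ hu₂),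
    h.relEntropy_prodDensity hu₁ hu₂, fstMarginal_prodDensity u₁ hu₂,
    sndMarginal_prodDensity hu₁ u₂]
  ring

lemma freeEnergy_marginals_le (hu : u ∈ MExp S 1) :
    S₁.freeEnergy T (fstMarginal S₂ u) + S₂.freeEnergy T (sndMarginal S₁ u) ≤
      S.freeEnergy T u := by
  rw [freeEnergy, freeEnergy, freeEnergy, h.upf_eq_add hu, add_add_add_comm, ← mul_add]
  gcongr
  exact h.relEntropy_marginals_le hu

theorem isCanonical_prodDensity (hT : 0 ≤ T) (hu₁ : IsCanonical S₁ T u₁)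
    (hu₂ : IsCanonical S₂ T u₂) : IsCanonical S T (prodDensity u₁ u₂) := by
  obtain ⟨hmem₁, hmin₁, htie₁⟩ := (isCanonical_iff hT).1 hu₁
  obtain ⟨hmem₂, hmin₂, htie₂⟩ := (isCanonical_iff hT).1 hu₂
  refine (isCanonical_iff hT).2 ⟨h.prodDensity_mem_mExp hmem₁ hmem₂, fun w hw ↦ ?_,
    fun w hw hle ↦ ?_⟩
  all_goals
    have hw₁ := h.fstMarginal_mem_mExp hw
    have hw₂ := h.sndMarginal_mem_mExp hw
  · rw [h.freeEnergy_prodDensity hmem₁ hmem₂]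
    exact (add_le_add (hmin₁ _ hw₁) (hmin₂ _ hw₂)).trans (h.freeEnergy_marginals_le hw)
  · rw [h.freeEnergy_prodDensity hmem₁ hmem₂] at hle
    rw [h.relEntropy_prodDensity hmem₁ hmem₂]
    have hsum := (h.freeEnergy_marginals_le hw).trans hle
    have hfin₁ : S₁.freeEnergy T u₁ ≠ ⊤ :=
      ne_top_of_le_ne_top freeEnergy_one_ne_top (hmin₁ _ one_mem_mExp)
    have hfin₂ : S₂.freeEnergy T u₂ ≠ ⊤ :=
      ne_top_of_le_ne_top freeEnergy_one_ne_top (hmin₂ _ one_mem_mExp)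
    have hle₁ := (ENNReal.add_le_add_iff_right hfin₂).1
      ((add_le_add_right (hmin₂ _ hw₂) _).trans hsum)
    have hle₂ := (ENNReal.add_le_add_iff_left hfin₁).1
      ((add_le_add_left (hmin₁ _ hw₁) _).trans hsum)
    exact (add_le_add (htie₁ _ hw₁ hle₁) (htie₂ _ hw₂ hle₂)).trans (h.relEntropy_marginals_le hw)

end IsComposite

end CompositeSystem

/-- The μ-canonical distribution of a composite system
`𝒫₁ × 𝒫₂ = (P₁ × P₂, μ₁ × μ₂, σ₁ ⊞ σ₂)` at temperature `T ≥ 0` is the product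
`u₁ × u₂` of the μ-canonical distributions of the subsystems at the same
temperature. -/
theorem canonical_distribution_of_product
    (ι₁ ι₂ : Type) [Fintype ι₁] [Fintype ι₂]
    (S₁ : SystemOn ι₁) (S₂ : SystemOn ι₂) (S : SystemOn (ι₁ ⊕ ι₂))
    (hP : S.P = {x | (fun i => x (Sum.inl i)) ∈ S₁.P ∧ (fun i => x (Sum.inr i)) ∈ S₂.P})
    (hμ : S.μ = (S₁.μ.prod S₂.μ).map (joinMap ι₁ ι₂))
    (hσ : S.σ = (S₁.σ.prod S₂.μ).map (joinMap ι₁ ι₂)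
        + (S₁.μ.prod S₂.σ).map (joinMap ι₁ ι₂))
    (T : ℝ) (hT : 0 ≤ T) (u₁ : (ι₁ → ℝ) → ℝ≥0∞) (u₂ : (ι₂ → ℝ) → ℝ≥0∞)
    (h₁ : IsCanonical S₁ T u₁) (h₂ : IsCanonical S₂ T u₂) :
    IsCanonical S T
      (fun x => u₁ (fun i => x (Sum.inl i)) * u₂ (fun i => x (Sum.inr i))) ∧
    ∀ u, IsCanonical S T u →
      Set.EqOn u
        (fun x => u₁ (fun i => x (Sum.inl i)) * u₂ (fun i => x (Sum.inr i))) S.P := by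
  have h : IsComposite S₁ S₂ S := ⟨hP, hμ, hσ⟩
  have hcan : IsCanonical S T (prodDensity u₁ u₂) := h.isCanonical_prodDensity hT h₁ h₂
  exact ⟨hcan, fun u hu ↦ hu.eqOn hT hcan⟩

end
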